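/- arXiv:1903.08603 — 10 statements merged into one kernel-verified Lean document; each statement's English description precedes it below -/
import Mathlib

section
/- Let d ≥ 1 and let G be a finite simple d-regular graph on n vertices. Then every 1/2-separator of G has size at least n·(d − λ(G))/(16d). -/
/-!
STATEMENT 0: Let d ≥ 1 and let G be a finite simple d-regular graph on n vertices.
Then every 1/2-separator of G has size at least n·(d − λ(G))/(16d).
-/

/-!
Any test function `g : V → ℝ` satisfies the Poincaré inequality
`(d - λ) (n ∑ g² - (∑ g)²) ≤ n (d ∑ g² - gᵀ A g)`: after subtracting its mean, `g` is orthogonal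
to the constant function, a top eigenvector of `A`, and on the orthogonal complement of a top
eigenvector the Rayleigh quotient is at most `λ`.  For the indicator of a set `S` of vertices this
reads `(d - λ) |S| (n - |S|) ≤ n e(S, V ∖ S)` (`edge_expansion`).

If `C` is a separator with `c` vertices, then all edges leaving a component `K` of `G - C` end in
`C`, and at most `d c` edges meet `C`.  Summing `edge_expansion` over all components, with
`n - |K| ≥ n / 2`, gives `(d - λ) (n - c) ≤ 2 d c`.  This settles the case `c ≤ n / 8`.  For larger
`c`, `edge_expansion` for a single vertex gives `d - λ ≤ 2 d`, which suffices.
-/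


noncomputable section

/-- The adjacency matrix of a simple graph over `ℝ` is Hermitian. -/
lemma adjMatrix_isHermitian {V : Type} [Fintype V] [DecidableEq V]
    (G : SimpleGraph V) [DecidableRel G.Adj] :
    (SimpleGraph.adjMatrix ℝ G).IsHermitian := by
  unfold Matrix.IsHermitian
  rw [Matrix.conjTranspose_eq_transpose_of_trivial]
  exact SimpleGraph.isSymm_adjMatrix G

/-- `λ(G)`: the second largest eigenvalue, counted with multiplicity, of the adjacency
matrix of `G` over the reals.  (For a tuple of reals indexed by at least two indices, the
second largest entry counted with multiplicity is the maximum over pairs of distinct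
indices of the minimum of the two corresponding entries.) -/
noncomputable def graphLambda {V : Type} [Fintype V] [DecidableEq V]
    (G : SimpleGraph V) [DecidableRel G.Adj] : ℝ :=
  sSup {x : ℝ | ∃ i j : V, i ≠ j ∧
    x = min ((adjMatrix_isHermitian G).eigenvalues i) ((adjMatrix_isHermitian G).eigenvalues j)}

/-- `C` is an `α`-separator of `G`: every connected component of the subgraph induced on
the complement of `C` has at most `α · |V|` vertices. -/
def IsAlphaSeparator {V : Type} [Fintype V] (G : SimpleGraph V) (α : ℝ) (C : Set V) : Prop :=
  ∀ K : (G.induce Cᶜ).ConnectedComponent, (K.supp.ncard : ℝ) ≤ α * (Fintype.card V : ℝ)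

/-! ### Spectral gap and edge expansion -/

section Spectral

open Finset Matrix

variable {V : Type} [Fintype V] [DecidableEq V] (G : SimpleGraph V) [DecidableRel G.Adj]

/-- The `i`-th coordinate of `f` in the orthonormal eigenbasis of the adjacency matrix. -/
def eigCoord (f : V → ℝ) (i : V) : ℝ :=
  f ⬝ᵥ ⇑((adjMatrix_isHermitian G).eigenvectorBasis i)

lemma sum_eigCoord_mul (f g : V → ℝ) :
    ∑ i, eigCoord G f i * eigCoord G g i = f ⬝ᵥ g := by
  have h := (adjMatrix_isHermitian G).eigenvectorBasis.sum_inner_mul_inner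
    (WithLp.toLp 2 f) (WithLp.toLp 2 g)
  simp only [EuclideanSpace.inner_eq_star_dotProduct, star_trivial] at h
  rw [dotProduct_comm f g, ← h]
  refine Finset.sum_congr rfl fun i _ => ?_
  rw [eigCoord, eigCoord, dotProduct_comm f]

lemma eigCoord_mulVec (f : V → ℝ) (i : V) :
    eigCoord G (G.adjMatrix ℝ *ᵥ f) i
      = (adjMatrix_isHermitian G).eigenvalues i * eigCoord G f i := by
  have h := (adjMatrix_isHermitian G).mulVec_eigenvectorBasis i
  have hs : (G.adjMatrix ℝ)ᵀ = G.adjMatrix ℝ := SimpleGraph.isSymm_adjMatrix G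
  unfold eigCoord
  rw [dotProduct_comm, dotProduct_mulVec, ← mulVec_transpose, hs, h, smul_dotProduct,
    dotProduct_comm, smul_eq_mul]

lemma eigenvalues_min_le_graphLambda {i j : V} (hij : i ≠ j) :
    min ((adjMatrix_isHermitian G).eigenvalues i) ((adjMatrix_isHermitian G).eigenvalues j)
      ≤ graphLambda G := by
  refine le_csSup ?_ ⟨i, j, hij, rfl⟩
  refine ((Set.finite_range fun p : V × V => min ((adjMatrix_isHermitian G).eigenvalues p.1)
    ((adjMatrix_isHermitian G).eigenvalues p.2)).subset ?_).bddAbove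
  rintro x ⟨i, j, -, rfl⟩
  exact ⟨(i, j), rfl⟩

variable {G} {d : ℕ}

lemma quadForm_le (hreg : G.IsRegularOfDegree d) (f : V → ℝ) :
    f ⬝ᵥ G.adjMatrix ℝ *ᵥ f ≤ d * (f ⬝ᵥ f) := by
  have h := (G.posSemidef_lapMatrix ℝ).dotProduct_mulVec_nonneg f
  rw [SimpleGraph.lapMatrix, star_trivial, sub_mulVec, dotProduct_sub,
    SimpleGraph.dotProduct_mulVec_degMatrix] at h
  have h2 : ∑ i, (G.degree i : ℝ) * f i * f i = d * (f ⬝ᵥ f) := by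
    simp only [dotProduct, Finset.mul_sum, hreg.degree_eq, mul_assoc]
  linarith

lemma eigenvalues_le (hreg : G.IsRegularOfDegree d) (i : V) :
    (adjMatrix_isHermitian G).eigenvalues i ≤ d := by
  have h := quadForm_le hreg ⇑((adjMatrix_isHermitian G).eigenvectorBasis i)
  have h1 : ⇑((adjMatrix_isHermitian G).eigenvectorBasis i) ⬝ᵥ
      ⇑((adjMatrix_isHermitian G).eigenvectorBasis i) = 1 := by
    have := (adjMatrix_isHermitian G).eigenvectorBasis.inner_eq_one i
    rwa [EuclideanSpace.inner_eq_star_dotProduct, star_trivial] at this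
  rw [(adjMatrix_isHermitian G).mulVec_eigenvectorBasis i, dotProduct_smul, h1] at h
  simpa using h

/-- The Rayleigh quotient of a function orthogonal to the constants is at most `λ`. -/
lemma quadForm_le_of_sum_eq_zero (hreg : G.IsRegularOfDegree d) (f : V → ℝ)
    (hf : ∑ v, f v = 0) :
    f ⬝ᵥ G.adjMatrix ℝ *ᵥ f ≤ graphLambda G * (f ⬝ᵥ f) := by
  rw [← sum_eigCoord_mul G f (G.adjMatrix ℝ *ᵥ f), ← sum_eigCoord_mul G f f, Finset.mul_sum]
  refine Finset.sum_le_sum fun i _ => ?_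
  rw [eigCoord_mulVec]
  rcases le_or_gt ((adjMatrix_isHermitian G).eigenvalues i) (graphLambda G) with hi | hi
  · nlinarith [mul_self_nonneg (eigCoord G f i)]
  -- An eigenvalue above `λ` is simple, so the constants span its eigenspace.
  have hone : ∀ j, j ≠ i → eigCoord G (fun _ => 1) j = 0 := by
    intro j hj
    have hA : G.adjMatrix ℝ *ᵥ (fun _ => 1) = (d : ℝ) • (fun _ => 1) := by
      ext v
      simp [SimpleGraph.adjMatrix_mulVec_apply, hreg.degree_eq]
    have h1 := eigCoord_mulVec G (fun _ => 1) j
    have hsm : eigCoord G ((d : ℝ) • (fun _ => 1)) j = d * eigCoord G (fun _ => 1) j :=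
      smul_dotProduct _ _ _
    rw [hA, hsm] at h1
    have h2 := eigenvalues_min_le_graphLambda G hj
    have h3 := eigenvalues_le hreg i
    have h4 : (adjMatrix_isHermitian G).eigenvalues j < d := by
      rcases min_le_iff.1 h2 with h | h <;> linarith
    by_contra h5
    exact h4.ne' (mul_right_cancel₀ h5 h1)
  have hsum : ∀ g : V → ℝ, eigCoord G (fun _ => 1) i * eigCoord G g i = ∑ v, g v := by
    intro g
    have h := sum_eigCoord_mul G (fun _ => 1) g
    rw [Finset.sum_eq_single i (fun j _ hj => by rw [hone j hj, zero_mul]) (by simp)] at h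
    rw [h]
    simp [dotProduct]
  have h0 : eigCoord G f i = 0 := by
    have h1 := hsum fun _ => 1
    have h2 := hsum f
    rw [hf] at h2
    refine (mul_eq_zero.1 h2).resolve_left fun h => ?_
    rw [h] at h1
    have : Nonempty V := ⟨i⟩
    simp [eq_comm] at h1
  simp [h0]

/-- The Poincaré inequality with the spectral gap `d - λ`. -/
lemma poincare (hreg : G.IsRegularOfDegree d) (g : V → ℝ) :
    (d - graphLambda G) * (Fintype.card V * (g ⬝ᵥ g) - (∑ v, g v) ^ 2)
      ≤ Fintype.card V * (d * (g ⬝ᵥ g) - g ⬝ᵥ G.adjMatrix ℝ *ᵥ g) := by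
  rcases isEmpty_or_nonempty V with hV | hV
  · simp
  have hn : (0 : ℝ) < Fintype.card V := by exact_mod_cast Fintype.card_pos
  set n : ℝ := (Fintype.card V : ℝ)
  set m : ℝ := (∑ v, g v) / n with hm
  have hmn : ∑ v, g v = m * n := by rw [hm]; field_simp
  set o : V → ℝ := fun _ => 1 with ho
  have hA : G.adjMatrix ℝ *ᵥ o = (d : ℝ) • o := by
    ext v
    simp [ho, SimpleGraph.adjMatrix_mulVec_apply, hreg.degree_eq]
  have hAt : (G.adjMatrix ℝ)ᵀ = G.adjMatrix ℝ := SimpleGraph.isSymm_adjMatrix G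
  have hoA : o ⬝ᵥ G.adjMatrix ℝ *ᵥ g = d * (m * n) := by
    rw [dotProduct_mulVec, ← mulVec_transpose, hAt, hA, smul_dotProduct, ← hmn]
    simp [ho, dotProduct]
  have hoo : o ⬝ᵥ o = n := by simp [ho, dotProduct, n]
  have hog : o ⬝ᵥ g = m * n := by rw [← hmn]; simp [ho, dotProduct]
  have hgo : g ⬝ᵥ o = m * n := by rw [dotProduct_comm, hog]
  have h := quadForm_le_of_sum_eq_zero hreg (g - m • o) (by
    simp [ho, Finset.sum_sub_distrib, hmn, n]
    ring)
  simp only [mulVec_sub, mulVec_smul, hA, sub_dotProduct, dotProduct_sub, smul_dotProduct,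
    dotProduct_smul, hoA, hoo, hog, hgo, smul_eq_mul] at h
  rw [hmn]
  nlinarith [mul_le_mul_of_nonneg_left h hn.le]

/-- The case of an indicator function: a lower bound on the number of edges leaving `S`. -/
lemma edge_expansion (hreg : G.IsRegularOfDegree d) (S : Finset V) :
    (d - graphLambda G) * (#S * (Fintype.card V - #S))
      ≤ Fintype.card V * ∑ u ∈ S, (#(G.neighborFinset u \ S) : ℝ) := by
  have h := poincare hreg fun v => if v ∈ S then (1 : ℝ) else 0
  have h1 : ((fun v => if v ∈ S then (1 : ℝ) else 0) ⬝ᵥ fun v => if v ∈ S then (1 : ℝ) else 0)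
      = #S := by
    simp [dotProduct]
  have h2 : ((fun v => if v ∈ S then (1 : ℝ) else 0) ⬝ᵥ
      G.adjMatrix ℝ *ᵥ fun v => if v ∈ S then (1 : ℝ) else 0)
      = ∑ u ∈ S, (#(G.neighborFinset u ∩ S) : ℝ) := by
    simp [dotProduct, SimpleGraph.adjMatrix_mulVec_apply]
  have h3 : ∑ u ∈ S, (#(G.neighborFinset u \ S) : ℝ)
      = d * #S - ∑ u ∈ S, (#(G.neighborFinset u ∩ S) : ℝ) := by
    rw [eq_sub_iff_add_eq, ← Finset.sum_add_distrib, mul_comm, ← nsmul_eq_mul, ← Finset.sum_const]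
    refine Finset.sum_congr rfl fun u _ => ?_
    rw [← hreg.degree_eq u, ← G.card_neighborFinset_eq_degree, ← Nat.cast_add,
      Finset.card_sdiff_add_card_inter]
  rw [h1, h2, Finset.sum_boole, Finset.filter_mem_eq_inter, Finset.univ_inter] at h
  rw [h3]
  linarith

end Spectral

/-! ### Components of the complement of a separator -/

section Components

open Finset

variable {V : Type} [Fintype V] [DecidableEq V] {G : SimpleGraph V} [DecidableRel G.Adj] {d : ℕ}

/-- At most `d |C|` edges join `C` to its complement. -/
lemma sum_neighbors_le (hreg : G.IsRegularOfDegree d) (C T : Finset V) :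
    ∑ u ∈ T, #(G.neighborFinset u ∩ C) ≤ d * #C := by
  have h : ∑ u ∈ T, #(G.neighborFinset u ∩ C) = ∑ v ∈ C, #(G.neighborFinset v ∩ T) := by
    convert Finset.sum_card_bipartiteAbove_eq_sum_card_bipartiteBelow (s := T) (t := C) G.Adj
      using 4 with u _ v _
    · ext w
      simp [Finset.mem_bipartiteAbove, and_comm]
    · ext w
      simp [Finset.mem_bipartiteBelow, and_comm, G.adj_comm]
  rw [h, mul_comm, ← smul_eq_mul]
  refine Finset.sum_le_card_nsmul _ _ _ fun v _ => ?_
  rw [← hreg.degree_eq v, ← G.card_neighborFinset_eq_degree]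
  exact Finset.card_le_card Finset.inter_subset_left

open Classical in
/-- Summing `edge_expansion` over the components of `G - C`. -/
lemma separator_bound (hreg : G.IsRegularOfDegree d) (C : Finset V)
    (hC : IsAlphaSeparator G (1 / 2) (C : Set V)) (hgap : graphLambda G ≤ d) :
    (d - graphLambda G) * (Fintype.card V - #C) ≤ 2 * d * #C := by
  rcases isEmpty_or_nonempty V with hV | hV
  · have : #C = 0 := by simp [Finset.eq_empty_of_isEmpty C]
    simp [this]
  have hn : (0 : ℝ) < Fintype.card V := by exact_mod_cast Fintype.card_pos
  set H := G.induce (C : Set V)ᶜ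
  -- the vertex set of a component, as a set of vertices of `G`
  let S : H.ConnectedComponent → Finset V := fun K =>
    (univ.filter fun u => H.connectedComponentMk u = K).map (Function.Embedding.subtype _)
  have hScard : ∀ K, (#(S K) : ℝ) ≤ 1 / 2 * Fintype.card V := by
    intro K
    refine le_trans (le_of_eq ?_) (hC K)
    rw [Finset.card_map, ← Set.ncard_coe_finset]
    congr 2
    ext u
    simp [SimpleGraph.ConnectedComponent.mem_supp_iff, H]
  have hfib : ∀ F : V → ℝ, ∑ K, ∑ u ∈ S K, F u = ∑ u ∈ Cᶜ, F u := by
    intro F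
    simp only [S, Finset.sum_map]
    refine (Finset.sum_fiberwise (univ : Finset ((C : Set V)ᶜ : Set V)) H.connectedComponentMk
      (fun u => F u)).trans ?_
    exact (Finset.sum_subtype Cᶜ (by simp) F).symm
  have hnb : ∀ K, ∀ u ∈ S K, G.neighborFinset u \ S K ⊆ G.neighborFinset u ∩ C := by
    intro K u hu v hv
    simp only [S, Finset.mem_map, Finset.mem_filter, Finset.mem_univ, true_and,
      Function.Embedding.subtype_apply] at hu hv
    obtain ⟨u, rfl, rfl⟩ := hu
    simp only [Finset.mem_sdiff, SimpleGraph.mem_neighborFinset] at hv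
    refine Finset.mem_inter.2 ⟨by simpa using hv.1, ?_⟩
    by_contra hvC
    refine hv.2 (Finset.mem_map.2 ⟨⟨v, by simpa using hvC⟩, ?_, rfl⟩)
    rw [Finset.mem_filter]
    refine ⟨Finset.mem_univ _, SimpleGraph.ConnectedComponent.sound ?_⟩
    exact (SimpleGraph.Adj.reachable (by simpa [H] using hv.1.symm))
  have hcomp : ∀ K, (d - graphLambda G) * ∑ _u ∈ S K, (1 : ℝ)
      ≤ 2 * ∑ u ∈ S K, (#(G.neighborFinset u ∩ C) : ℝ) := by
    intro K
    have h1 := edge_expansion hreg (S K)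
    have h2 : ∑ u ∈ S K, (#(G.neighborFinset u \ S K) : ℝ)
        ≤ ∑ u ∈ S K, (#(G.neighborFinset u ∩ C) : ℝ) :=
      Finset.sum_le_sum fun u hu => by exact_mod_cast Finset.card_le_card (hnb K u hu)
    have h3 : (d - graphLambda G) * (#(S K) * (1 / 2 * Fintype.card V))
        ≤ (d - graphLambda G) * (#(S K) * (Fintype.card V - #(S K))) := by
      refine mul_le_mul_of_nonneg_left (mul_le_mul_of_nonneg_left ?_ (Nat.cast_nonneg _))
        (sub_nonneg.2 hgap)
      linarith [hScard K]
    have h4 := mul_le_mul_of_nonneg_left h2 hn.le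
    rw [Finset.sum_const, nsmul_eq_mul, mul_one]
    refine le_of_mul_le_mul_left ?_ hn
    linarith
  have hsum := Finset.sum_le_sum fun K (_ : K ∈ univ) => hcomp K
  rw [← Finset.mul_sum, ← Finset.mul_sum, hfib, hfib, Finset.sum_const, nsmul_eq_mul, mul_one,
    Finset.card_compl, Nat.cast_sub (Finset.card_le_univ C)] at hsum
  have h5 : ∑ u ∈ Cᶜ, (#(G.neighborFinset u ∩ C) : ℝ) ≤ d * #C := by
    exact_mod_cast sum_neighbors_le hreg C Cᶜ
  linarith

end Components

theorem statement_0 {V : Type} [Fintype V] [DecidableEq V]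
    (G : SimpleGraph V) [DecidableRel G.Adj] (d : ℕ) (hd : 1 ≤ d)
    (hreg : G.IsRegularOfDegree d) (C : Set V)
    (hC : IsAlphaSeparator G (1/2) C) :
    (Fintype.card V : ℝ) * ((d : ℝ) - graphLambda G) / (16 * d) ≤ (C.ncard : ℝ) := by
  classical
  obtain ⟨C, rfl⟩ : ∃ D : Finset V, (D : Set V) = C := ⟨C.toFinset, by simp⟩
  rw [Set.ncard_coe_finset]
  have hd' : (1 : ℝ) ≤ d := by exact_mod_cast hd
  have hc : (0 : ℝ) ≤ C.card := Nat.cast_nonneg _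
  rcases isEmpty_or_nonempty V with hV | ⟨⟨v⟩⟩
  · simp
  rw [div_le_iff₀ (by positivity)]
  rcases le_or_gt (d : ℝ) (graphLambda G) with hgap | hgap
  · have h1 := mul_nonneg (Nat.cast_nonneg (α := ℝ) (Fintype.card V)) (sub_nonneg.2 hgap)
    have h2 : 0 ≤ (C.card : ℝ) * (16 * d) := by positivity
    linarith
  rcases le_or_gt (8 * (C.card : ℝ)) (Fintype.card V) with hsmall | hlarge
  · have h1 := separator_bound hreg C hC hgap.le
    have h2 : ((d : ℝ) - graphLambda G) * (Fintype.card V / 2)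
        ≤ (d - graphLambda G) * (Fintype.card V - C.card) :=
      mul_le_mul_of_nonneg_left (by linarith) (sub_nonneg.2 hgap.le)
    nlinarith
  · have hcard : (2 : ℝ) ≤ Fintype.card V := by
      have h1 : G.degree v < Fintype.card V := G.degree_lt_card_verts v
      rw [hreg.degree_eq] at h1
      exact_mod_cast (by omega : 2 ≤ Fintype.card V)
    have h1 := edge_expansion hreg {v}
    have h2 : ((G.neighborFinset v \ {v}).card : ℝ) ≤ d := by
      rw [← hreg.degree_eq v, ← G.card_neighborFinset_eq_degree]
      exact_mod_cast Finset.card_le_card Finset.sdiff_subset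
    rw [Finset.sum_singleton, Finset.card_singleton, Nat.cast_one, one_mul] at h1
    have h3 : ((d : ℝ) - graphLambda G) * (Fintype.card V / 2)
        ≤ (d - graphLambda G) * (Fintype.card V - 1) :=
      mul_le_mul_of_nonneg_left (by linarith) (sub_nonneg.2 hgap.le)
    have h4 : (Fintype.card V : ℝ) * (G.neighborFinset v \ {v}).card ≤ Fintype.card V * d :=
      mul_le_mul_of_nonneg_left h2 (Nat.cast_nonneg _)
    have h5 : (Fintype.card V : ℝ) * d ≤ 8 * C.card * d :=
      mul_le_mul_of_nonneg_right hlarge.le (by linarith)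
    nlinarith

end
end

section
/- Let d ≥ 1 and let G be a finite simple d-regular graph on n vertices. Then the treewidth of G satisfies tw(G) ≥ ⌊n·(d − λ(G))/(8d)⌋. -/
/-!
Let `n = |V|` and let `k` be the maximum bag size of an optimal tree decomposition, so that the
claim says `n (d - λ) < 8 d k`. The argument exhibits a small balanced separator and compares it
with the spectral gap.

*Separator.* For each vertex fix a tree node whose bag contains it, and let `t` minimise the sum of
the distances to these nodes. Colour each vertex outside the bag `X` of `t` by the branch of the
tree at `t` that contains its node. Adjacent vertices get equal colours, since their subtrees avoid
`t` and meet; and no colour is used more than `n / 2` times, since otherwise stepping into that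
branch would decrease the sum (`exists_centroid_bag`). If `|X| ≤ n / 4`, the colours can be merged
into two sets `A`, `B` of size at least `n / 4` with no edges between them (`exists_balanced`).

*Spectral gap.* On the plane spanned by the indicator vectors of `A` and `B` the quadratic form of
the adjacency matrix is diagonal, and as at most `d |X|` edges leave `A` or `B` its Rayleigh
quotient is at least `d - 4 d |X| / n`. The plane contains a nonzero vector orthogonal to a top
eigenvector, so `λ ≥ d - 4 d |X| / n` (`separator_bound`).

If `8 d k ≤ n (d - λ)`, then `λ ≥ -1 ≥ -d` gives `|X| ≤ k ≤ n / 4`, so the above applies and yields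
`8 d k ≤ n (d - λ) ≤ 4 d |X| ≤ 4 d k`, which is absurd because `d, k ≥ 1`.
-/

/-!
STATEMENT 1: Let d ≥ 1 and let G be a finite simple d-regular graph on n vertices.
Then the treewidth of G satisfies tw(G) ≥ ⌊n·(d − λ(G))/(8d)⌋.
-/

noncomputable section

/-- A tree decomposition of a graph `G`: a tree `T` together with a family of bags,
covering all vertices and all edges, such that for every vertex `v` the set of tree nodes
whose bag contains `v` induces a connected subgraph of the tree. -/
structure TreeDecomp {V : Type} (G : SimpleGraph V) where
  ι : Type
  tree : SimpleGraph ι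
  isTree : tree.IsTree
  bag : ι → Set V
  bag_cover : ∀ v : V, ∃ t, v ∈ bag t
  bag_edge : ∀ ⦃u v : V⦄, G.Adj u v → ∃ t, u ∈ bag t ∧ v ∈ bag t
  bag_conn : ∀ v : V, (tree.induce {t | v ∈ bag t}).Connected

/-- The width of a tree decomposition: the maximum bag size minus one. -/
noncomputable def TreeDecomp.width {V : Type} {G : SimpleGraph V} (d : TreeDecomp G) : ℕ :=
  (⨆ t : d.ι, (d.bag t).ncard) - 1

/-- The treewidth of `G`: the minimum width of a tree decomposition of `G`. -/
noncomputable def treewidth {V : Type} (G : SimpleGraph V) : ℕ :=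
  sInf {k : ℕ | ∃ d : TreeDecomp G, d.width = k}

/-! ### Centroid bags of tree decompositions -/

section TreePart

variable {ι : Type}

/-- `nxt x` is the first step of the path from `t` to `x` in a tree. It moves closer to `x`, and it
is constant along edges avoiding `t`, hence on the branches of the tree at `t`. -/
lemma exists_next {T : SimpleGraph ι} (hT : T.IsTree) (t : ι) :
    ∃ nxt : ι → ι, (∀ x, x ≠ t → T.Adj t (nxt x) ∧ T.dist (nxt x) x + 1 ≤ T.dist t x) ∧
      ∀ x y, T.Adj x y → x ≠ t → y ≠ t → nxt x = nxt y := by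
  choose p hp using fun x => (hT.connected t x).exists_path_of_dist
  refine ⟨fun x => (p x).snd, ?_, ?_⟩
  · intro x hx
    have hnil : ¬ (p x).Nil := SimpleGraph.Walk.not_nil_of_ne hx.symm
    refine ⟨(p x).adj_snd hnil, ?_⟩
    have h1 := SimpleGraph.dist_le (p x).tail
    have h2 := SimpleGraph.Walk.length_tail_add_one hnil
    have h3 := (hp x).2
    show T.dist (p x).snd x + 1 ≤ T.dist t x
    omega
  · -- Of the paths to two adjacent nodes, one extends the other by the edge between them.
    have key : ∀ x y, T.Adj x y → x ≠ t → x ∈ (p y).support → (p x).snd = (p y).snd := by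
      intro x y hxy hx hs
      rw [hT.isAcyclic.path_concat (hp x).1 (hp y).1 hxy hs]
      have hnil : ¬ (p x).Nil := SimpleGraph.Walk.not_nil_of_ne hx.symm
      generalize p x = q at hnil
      cases q with
      | nil => simp at hnil
      | cons h q => simp [SimpleGraph.Walk.concat]
    intro x y hxy hx hy
    by_cases hs : x ∈ (p y).support
    · exact key x y hxy hx hs
    · exact (key y x hxy.symm hy
        (hT.isAcyclic.mem_support_of_ne_mem_support_of_adj_of_isPath (hp x).1 (hp y).1
          hxy hs)).symm

/-- A function on the nodes that is constant along edges inside `S` is constant on `S`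
if `S` is connected. -/
lemma const_of_connected {T : SimpleGraph ι} {S : Set ι} (hS : (T.induce S).Connected)
    {f : ι → ι} (hf : ∀ x ∈ S, ∀ y ∈ S, T.Adj x y → f x = f y) {x y : ι} (hx : x ∈ S)
    (hy : y ∈ S) : f x = f y := by
  obtain ⟨w⟩ := hS ⟨x, hx⟩ ⟨y, hy⟩
  have aux : ∀ a b : S, (T.induce S).Walk a b → f a = f b := by
    intro a b w
    induction w with
    | nil => rfl
    | @cons a b c h _ ih => exact (hf a a.2 b b.2 h).trans ih
  exact aux _ _ w

/-- Some bag is a centroid: the vertices outside it can be coloured so that adjacent ones agree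
and no colour is used on more than half of all vertices. The bag chosen minimises the sum of the
distances to nodes representing the vertices, and a vertex is coloured by the branch containing
its node. -/
lemma exists_centroid_bag {V : Type} [Fintype V] {G : SimpleGraph V} (D : TreeDecomp G) :
    ∃ (t : D.ι) (c : V → D.ι),
      (∀ u v, u ∉ D.bag t → v ∉ D.bag t → G.Adj u v → c u = c v) ∧
      ∀ (i : D.ι) (F : Finset V), (∀ v ∈ F, v ∉ D.bag t ∧ c v = i) →
        2 * F.card ≤ Fintype.card V := by
  classical
  choose r hr using D.bag_cover
  have hT := D.isTree
  obtain ⟨t0⟩ := hT.connected.nonempty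
  obtain ⟨t, -, ht⟩ := exists_minimalFor_of_wellFoundedLT (fun _ : D.ι => True)
    (fun t => ∑ v, D.tree.dist t (r v)) ⟨t0, trivial⟩
  have ht' : ∀ s, ∑ v, D.tree.dist t (r v) ≤ ∑ v, D.tree.dist s (r v) := by
    intro s
    rcases le_total (∑ v, D.tree.dist t (r v)) (∑ v, D.tree.dist s (r v)) with h | h
    · exact h
    · exact ht trivial h
  obtain ⟨nxt, hn1, hn2⟩ := exists_next hT t
  have hconst : ∀ v x, v ∉ D.bag t → v ∈ D.bag x → nxt (r v) = nxt x := by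
    intro v x hv hx
    refine const_of_connected (D.bag_conn v) ?_ (hr v) hx
    intro a ha b hb hab
    refine hn2 a b hab ?_ ?_
    · rintro rfl; exact hv ha
    · rintro rfl; exact hv hb
  refine ⟨t, fun v => nxt (r v), ?_, ?_⟩
  · intro u v hu hv huv
    obtain ⟨x, hux, hvx⟩ := D.bag_edge huv
    exact (hconst u x hu hux).trans (hconst v x hv hvx).symm
  · intro i F hF
    rcases F.eq_empty_or_nonempty with rfl | ⟨v0, hv0⟩
    · simp
    have hFi : ∀ v ∈ F, nxt (r v) = i := fun v hv => (hF v hv).2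
    have hne : ∀ v ∈ F, r v ≠ t := by
      intro v hv h
      exact (hF v hv).1 (h ▸ hr v)
    have hadj : D.tree.Adj t i := by
      have := (hn1 (r v0) (hne v0 hv0)).1
      rwa [hFi v0 hv0] at this
    -- Moving from `t` to `i` gains `1` on `F` and loses at most `1` elsewhere.
    have hstep : ∀ v, D.tree.dist i (r v) + (if v ∈ F then 2 else 0) ≤
        D.tree.dist t (r v) + 1 := by
      intro v
      split_ifs with hv
      · have := (hn1 (r v) (hne v hv)).2
        rw [hFi v hv] at this
        omega
      · have h1 := hT.connected.dist_triangle (u := i) (v := t) (w := r v)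
        have h2 : D.tree.dist i t = 1 := SimpleGraph.dist_eq_one_iff_adj.2 hadj.symm
        omega
    have hsum := Finset.sum_le_sum (fun v (_ : v ∈ Finset.univ) => hstep v)
    rw [Finset.sum_add_distrib, Finset.sum_add_distrib] at hsum
    have h3 := ht' i
    simp at hsum
    omega

end TreePart

/-- Merging colour classes: if every class has at most half of the total `n` and there are at
least `3n/4` elements, some union of classes and its complement both have at least `n/4`. -/
lemma exists_balanced {V ι : Type} [DecidableEq V] (Y : Finset V) (c : V → ι) (n : ℕ)
    (hY : 3 * n ≤ 4 * Y.card)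
    (hc : ∀ (i : ι) (F : Finset V), (∀ v ∈ F, v ∈ Y ∧ c v = i) → 2 * F.card ≤ n) :
    ∃ A B : Finset V, A ⊆ Y ∧ B ⊆ Y ∧ Disjoint A B ∧ A ∪ B = Y ∧ n ≤ 4 * A.card ∧
      n ≤ 4 * B.card ∧ ∀ u ∈ A, ∀ v ∈ B, c u ≠ c v := by
  classical
  let w : Finset ι → Finset V := fun S => Y.filter (fun v => c v ∈ S)
  -- A minimal set of colours of total size at least `n / 4`.
  obtain ⟨S, hS, hmin⟩ := exists_minimalFor_of_wellFoundedLT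
    (fun S : Finset ι => n ≤ 4 * (w S).card) Finset.card ⟨Y.image c, by
      have : w (Y.image c) = Y := by
        ext v; simp only [w, Finset.mem_filter, Finset.mem_image]
        exact ⟨fun h => h.1, fun h => ⟨h, v, h, rfl⟩⟩
      show n ≤ 4 * (w (Y.image c)).card
      rw [this]; omega⟩
  have hS' : n ≤ 4 * (w S).card := hS
  have hhalf : 2 * (w S).card ≤ n := by
    by_contra hbig
    have hne : S.Nonempty := by
      rw [Finset.nonempty_iff_ne_empty]
      rintro rfl
      simp [w] at hbig
    obtain ⟨i, hi⟩ := hne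
    have hsmall : ∀ R : Finset ι, R.card < S.card → 4 * (w R).card < n := by
      intro R hR
      by_contra h
      have := hmin (j := R) (by show n ≤ 4 * (w R).card; omega) hR.le
      omega
    have h1 := hsmall (S.erase i) (Finset.card_erase_lt_of_mem hi)
    have h2 : (w S).card ≤ (w (S.erase i)).card + (w {i}).card := by
      refine (Finset.card_le_card ?_).trans (Finset.card_union_le _ _)
      intro v hv
      simp only [w, Finset.mem_filter, Finset.mem_union, Finset.mem_erase,
        Finset.mem_singleton] at hv ⊢
      tauto
    have h3 : 2 * (w {i}).card ≤ n := hc i _ (by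
      intro v hv
      simpa [w] using hv)
    rcases Nat.lt_or_ge 1 S.card with h4 | h4
    · have := hsmall {i} (by simpa using h4)
      omega
    · have h5 : S = {i} := by
        have := Finset.card_le_one.1 h4
        ext j
        simp only [Finset.mem_singleton]
        exact ⟨fun hj => this j hj i hi, fun hj => hj ▸ hi⟩
      rw [h5] at hbig
      exact hbig h3
  have hsplit : (w S).card + (Y \ w S).card = Y.card := by
    rw [add_comm]
    exact Finset.card_sdiff_add_card_eq_card (Finset.filter_subset _ _)
  refine ⟨w S, Y \ w S, Finset.filter_subset _ _, Finset.sdiff_subset, Finset.disjoint_sdiff,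
    Finset.union_sdiff_of_subset (Finset.filter_subset _ _), hS', by omega, ?_⟩
  intro u hu v hv huv
  simp only [w, Finset.mem_filter, Finset.mem_sdiff] at hu hv
  exact hv.2 ⟨hv.1, huv ▸ hu.2⟩

/-! ### The second eigenvalue and separators -/

section Spectral

open Matrix

lemma dot_mulVec_eq {V : Type} [Fintype V] (G : SimpleGraph V) [DecidableRel G.Adj]
    (f : V → ℝ) :
    f ⬝ᵥ (G.adjMatrix ℝ *ᵥ f) = ∑ u, ∑ v, if G.Adj u v then f u * f v else 0 := by
  simp only [dotProduct, mulVec, SimpleGraph.adjMatrix_apply, Finset.mul_sum]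
  refine Finset.sum_congr rfl fun u _ => Finset.sum_congr rfl fun v _ => ?_
  split_ifs <;> simp

variable {V : Type} [Fintype V] [DecidableEq V] (G : SimpleGraph V) [DecidableRel G.Adj]

/-- All eigenvalues except the one at a maximising index are at most `λ(G)`. -/
lemma exists_top_index [Nonempty V] :
    ∃ i₀ : V, ∀ i, i ≠ i₀ → (adjMatrix_isHermitian G).eigenvalues i ≤ graphLambda G := by
  obtain ⟨i₀, h⟩ := Finite.exists_max (adjMatrix_isHermitian G).eigenvalues
  refine ⟨i₀, fun i hi => ?_⟩
  refine le_csSup ?_ ⟨i, i₀, hi, (min_eq_left (h i)).symm⟩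
  refine Set.Finite.bddAbove (Set.Finite.subset (Set.finite_range (fun p : V × V =>
    min ((adjMatrix_isHermitian G).eigenvalues p.1) ((adjMatrix_isHermitian G).eigenvalues p.2))) ?_)
  rintro x ⟨i, j, -, rfl⟩
  exact ⟨(i, j), rfl⟩

/-- A real vector orthogonal to the top eigenvector has Rayleigh quotient at most `λ(G)`. -/
lemma exists_rayleigh [Nonempty V] :
    ∃ u₀ : V → ℝ, ∀ f : V → ℝ, f ⬝ᵥ u₀ = 0 →
      f ⬝ᵥ (G.adjMatrix ℝ *ᵥ f) ≤ graphLambda G * (f ⬝ᵥ f) := by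
  obtain ⟨i₀, hi₀⟩ := exists_top_index G
  let hA := adjMatrix_isHermitian G
  let u : V → V → ℝ := fun i => ⇑(hA.eigenvectorBasis i)
  have hsum : ∀ f g : V → ℝ, ∑ i, (f ⬝ᵥ u i) * (u i ⬝ᵥ g) = f ⬝ᵥ g := by
    intro f g
    have := hA.eigenvectorBasis.sum_inner_mul_inner (WithLp.toLp 2 f) (WithLp.toLp 2 g)
    simp only [EuclideanSpace.inner_eq_star_dotProduct, star_trivial] at this
    rw [dotProduct_comm f g, ← this]
    refine Finset.sum_congr rfl fun i _ => ?_
    rw [dotProduct_comm f, dotProduct_comm (u i) g]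
  have hev : ∀ i (f : V → ℝ), u i ⬝ᵥ (G.adjMatrix ℝ *ᵥ f) = hA.eigenvalues i * (f ⬝ᵥ u i) := by
    intro i f
    have h1 := hA.mulVec_eigenvectorBasis i
    rw [dotProduct_mulVec, ← mulVec_transpose, SimpleGraph.transpose_adjMatrix]
    change (G.adjMatrix ℝ *ᵥ u i) ⬝ᵥ f = _
    have h2 : G.adjMatrix ℝ *ᵥ u i = hA.eigenvalues i • u i := h1
    rw [h2, smul_dotProduct, smul_eq_mul, dotProduct_comm]
  refine ⟨u i₀, fun f hf => ?_⟩
  rw [← hsum f (G.adjMatrix ℝ *ᵥ f), ← hsum f f, Finset.mul_sum]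
  refine Finset.sum_le_sum fun i _ => ?_
  rw [hev, dotProduct_comm (u i) f]
  by_cases hi : i = i₀
  · subst hi; rw [hf]; simp
  · nlinarith [hi₀ i hi, mul_self_nonneg (f ⬝ᵥ u i)]

/-- The instance of the Courant–Fischer principle for the plane spanned by the indicator vectors
of two disjoint nonempty sets: a lower bound for the Rayleigh quotient there bounds `λ(G)`. -/
lemma le_graphLambda_of_plane {A B : Finset V} (hA : A.Nonempty) (hAB : Disjoint A B)
    (hB : B.Nonempty) {c : ℝ}
    (h : ∀ α β : ℝ, ∀ f : V → ℝ, (∀ v, f v = if v ∈ A then α else if v ∈ B then β else 0) →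
      c * (f ⬝ᵥ f) ≤ f ⬝ᵥ (G.adjMatrix ℝ *ᵥ f)) : c ≤ graphLambda G := by
  obtain ⟨a, ha⟩ := hA
  obtain ⟨b, hb⟩ := hB
  have : Nonempty V := ⟨a⟩
  obtain ⟨u₀, hu⟩ := exists_rayleigh G
  have key : ∀ α β : ℝ, (α ≠ 0 ∨ β ≠ 0) →
      (∑ v ∈ A, u₀ v) * α + (∑ v ∈ B, u₀ v) * β = 0 → c ≤ graphLambda G := by
    intro α β hne h0
    let f : V → ℝ := fun v => if v ∈ A then α else if v ∈ B then β else 0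
    have hsplit : ∀ v, f v = (if v ∈ A then α else 0) + (if v ∈ B then β else 0) := by
      intro v
      by_cases hv : v ∈ A
      · simp [f, hv, Finset.disjoint_left.1 hAB hv]
      · simp [f, hv]
    have horth : f ⬝ᵥ u₀ = 0 := by
      rw [← h0, dotProduct, Finset.sum_mul, Finset.sum_mul]
      simp_rw [hsplit, add_mul, Finset.sum_add_distrib, ite_mul, zero_mul]
      simp [Finset.sum_ite_mem, mul_comm]
    have hpos : 0 < f ⬝ᵥ f := by
      have hnn : ∀ v ∈ Finset.univ, 0 ≤ f v * f v := fun v _ => mul_self_nonneg _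
      rcases hne with hα | hβ
      · refine Finset.sum_pos' hnn ⟨a, Finset.mem_univ _, ?_⟩
        simpa [f, ha] using hα
      · refine Finset.sum_pos' hnn ⟨b, Finset.mem_univ _, ?_⟩
        simpa [f, hb, Finset.disjoint_right.1 hAB hb] using hβ
    exact le_of_mul_le_mul_right ((h α β f fun v => rfl).trans (hu f horth)) hpos
  by_cases hz : (∑ v ∈ A, u₀ v) = 0 ∧ (∑ v ∈ B, u₀ v) = 0
  · exact key 1 0 (Or.inl one_ne_zero) (by rw [hz.1, hz.2]; ring)
  · refine key (∑ v ∈ B, u₀ v) (-∑ v ∈ A, u₀ v) ?_ (by ring)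
    rw [neg_ne_zero]
    tauto

/-- The indicator vectors of two single vertices give `λ(G) ≥ -1`. -/
lemma neg_one_le_graphLambda {a b : V} (hab : a ≠ b) : -1 ≤ graphLambda G := by
  refine le_graphLambda_of_plane G (A := {a}) (B := {b}) (by simp) (by simpa using hab)
    (by simp) ?_
  intro α β f hf
  have hsum : ∀ g : V → ℝ, (∀ v, v ≠ a → v ≠ b → g v = 0) → ∑ v, g v = g a + g b := by
    intro g hg
    rw [← Finset.sum_pair hab]
    symm
    refine Finset.sum_subset (Finset.subset_univ _) fun v _ hv => ?_
    simp only [Finset.mem_insert, Finset.mem_singleton, not_or] at hv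
    exact hg v hv.1 hv.2
  have hf0 : ∀ v, v ≠ a → v ≠ b → f v = 0 := by
    intro v h1 h2; rw [hf]; simp [h1, h2]
  rw [dot_mulVec_eq, hsum _ (fun v h1 h2 => by simp [hf0 v h1 h2]),
    hsum _ (fun v h1 h2 => by simp [hf0 v h1 h2]), hsum _ (fun v h1 h2 => by simp [hf0 v h1 h2]),
    dotProduct, hsum _ (fun v h1 h2 => by simp [hf0 v h1 h2])]
  simp only [SimpleGraph.irrefl, if_false, G.adj_comm b a]
  split_ifs
  · nlinarith [sq_nonneg (f a + f b)]
  · nlinarith [sq_nonneg (f a), sq_nonneg (f b)]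

/-- In a `d`-regular graph, a set `A` whose neighbours lie in `A ∪ X` spans at least
`d (|A| - |X|)` ordered adjacent pairs. -/
lemma inner_edges_ge {d : ℕ} (hreg : G.IsRegularOfDegree d) {A X : Finset V}
    (hN : ∀ u ∈ A, ∀ v, G.Adj u v → v ∈ A ∨ v ∈ X) :
    (d : ℝ) * A.card - d * X.card ≤ ∑ u ∈ A, ∑ v ∈ A, if G.Adj u v then (1 : ℝ) else 0 := by
  have hdeg : ∀ u, (∑ v, if G.Adj u v then (1 : ℝ) else 0) = d := by
    intro u
    rw [Finset.sum_boole, ← hreg u, ← SimpleGraph.card_neighborFinset_eq_degree,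
      SimpleGraph.neighborFinset_eq_filter]
  have h1 : ∀ u ∈ A, (d : ℝ) ≤ (∑ v ∈ A, if G.Adj u v then (1 : ℝ) else 0) +
      ∑ v ∈ X, if G.Adj u v then (1 : ℝ) else 0 := by
    intro u hu
    rw [← hdeg u, ← Finset.sum_union_inter]
    have h2 : (∑ v, if G.Adj u v then (1 : ℝ) else 0) =
        ∑ v ∈ A ∪ X, if G.Adj u v then (1 : ℝ) else 0 := by
      symm
      refine Finset.sum_subset (Finset.subset_univ _) fun v _ hv => ?_
      rw [if_neg]
      intro hadj
      exact hv (Finset.mem_union.2 (hN u hu v hadj))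
    rw [h2]
    exact le_add_of_nonneg_right (Finset.sum_nonneg fun v _ => by split_ifs <;> simp)
  have h2 := Finset.sum_le_sum h1
  rw [Finset.sum_add_distrib, Finset.sum_const, nsmul_eq_mul] at h2
  have h3 : (∑ u ∈ A, ∑ v ∈ X, if G.Adj u v then (1 : ℝ) else 0) ≤ X.card * d := by
    rw [Finset.sum_comm, ← nsmul_eq_mul, ← Finset.sum_const]
    refine Finset.sum_le_sum fun v _ => ?_
    rw [← hdeg v]
    simp_rw [G.adj_comm _ v]
    exact Finset.sum_le_sum_of_subset_of_nonneg (Finset.subset_univ _)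
      fun u _ _ => by split_ifs <;> simp
  linarith [mul_comm (A.card : ℝ) d, mul_comm (X.card : ℝ) d]

/-- If deleting `X` separates two sets of size at least `n/4` which cover the rest, then
`|X|` is at least `n (d - λ(G)) / (4d)`. -/
lemma separator_bound_s1 {d : ℕ} (hreg : G.IsRegularOfDegree d) {A B X : Finset V}
    (hAB : Disjoint A B) (hcover : ∀ v, v ∈ A ∨ v ∈ B ∨ v ∈ X)
    (hsep : ∀ u ∈ A, ∀ v ∈ B, ¬ G.Adj u v) (hn : 0 < Fintype.card V)
    (hA : Fintype.card V ≤ 4 * A.card) (hB : Fintype.card V ≤ 4 * B.card) :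
    (Fintype.card V : ℝ) * (d - graphLambda G) ≤ 4 * d * X.card := by
  have hn' : (0 : ℝ) < Fintype.card V := by exact_mod_cast hn
  have hA' : (Fintype.card V : ℝ) ≤ 4 * A.card := by exact_mod_cast hA
  have hB' : (Fintype.card V : ℝ) ≤ 4 * B.card := by exact_mod_cast hB
  have hEA := inner_edges_ge G hreg (A := A) (X := X) (by
    intro u hu v huv
    rcases hcover v with h | h | h
    · exact Or.inl h
    · exact absurd huv (hsep u hu v h)
    · exact Or.inr h)
  have hEB := inner_edges_ge G hreg (A := B) (X := X) (by
    intro u hu v huv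
    rcases hcover v with h | h | h
    · exact absurd huv.symm (hsep v h u hu)
    · exact Or.inl h
    · exact Or.inr h)
  set EA := ∑ u ∈ A, ∑ v ∈ A, if G.Adj u v then (1 : ℝ) else 0
  set EB := ∑ u ∈ B, ∑ v ∈ B, if G.Adj u v then (1 : ℝ) else 0
  set n : ℝ := (Fintype.card V : ℝ)
  have hmain : (d : ℝ) - 4 * d * X.card / n ≤ graphLambda G := by
    refine le_graphLambda_of_plane G (A := A) (B := B) (Finset.card_pos.1 (by omega)) hAB
      (Finset.card_pos.1 (by omega)) ?_
    intro α β f hf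
    have hA_f : ∀ v ∈ A, f v = α := fun v hv => by rw [hf, if_pos hv]
    have hB_f : ∀ v ∈ B, f v = β := fun v hv => by
      rw [hf, if_neg (Finset.disjoint_right.1 hAB hv), if_pos hv]
    have hsum : ∀ g : V → ℝ, (∀ v, f v = 0 → g v = 0) →
        ∑ v, g v = ∑ v ∈ A, g v + ∑ v ∈ B, g v := by
      intro g hg
      rw [← Finset.sum_union hAB]
      symm
      refine Finset.sum_subset (Finset.subset_univ _) fun v _ hv => hg v ?_
      rw [Finset.mem_union, not_or] at hv
      rw [hf, if_neg hv.1, if_neg hv.2]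
    have hff : f ⬝ᵥ f = α ^ 2 * A.card + β ^ 2 * B.card := by
      rw [dotProduct, hsum _ (fun v hv => by simp [hv]),
        Finset.sum_congr rfl (fun v hv => by rw [hA_f v hv]),
        Finset.sum_congr (s₁ := B) rfl (fun v hv => by rw [hB_f v hv])]
      simp only [Finset.sum_const, nsmul_eq_mul]
      ring
    have hfAf : f ⬝ᵥ (G.adjMatrix ℝ *ᵥ f) = α ^ 2 * EA + β ^ 2 * EB := by
      rw [dot_mulVec_eq, hsum _ (fun v hv => by simp [hv]), Finset.mul_sum, Finset.mul_sum]
      congr 1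
      · refine Finset.sum_congr rfl fun u hu => ?_
        rw [hsum _ (fun v hv => by simp [hv]),
          Finset.sum_eq_zero (s := B) fun v hv => if_neg (hsep u hu v hv), add_zero,
          Finset.mul_sum]
        refine Finset.sum_congr rfl fun v hv => ?_
        rw [hA_f u hu, hA_f v hv, mul_ite, mul_one, mul_zero, sq]
      · refine Finset.sum_congr rfl fun u hu => ?_
        rw [hsum _ (fun v hv => by simp [hv]),
          Finset.sum_eq_zero (s := A) fun v hv => if_neg fun h => hsep v hv u hu h.symm, zero_add,
          Finset.mul_sum]
        refine Finset.sum_congr rfl fun v hv => ?_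
        rw [hB_f u hu, hB_f v hv, mul_ite, mul_one, mul_zero, sq]
    have hscale : ∀ a : ℝ, n ≤ 4 * a →
        ((d : ℝ) - 4 * d * X.card / n) * a ≤ d * a - d * X.card := by
      intro a ha
      have h1 : (d : ℝ) * X.card ≤ 4 * d * X.card / n * a := by
        rw [div_mul_eq_mul_div, le_div_iff₀ hn']
        have h2 : (0 : ℝ) ≤ d * X.card := by positivity
        nlinarith
      linarith
    rw [hff, hfAf]
    have h1 := mul_le_mul_of_nonneg_left ((hscale _ hA').trans hEA) (sq_nonneg α)
    have h2 := mul_le_mul_of_nonneg_left ((hscale _ hB').trans hEB) (sq_nonneg β)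
    linarith
  have h := mul_le_mul_of_nonneg_left hmain hn'.le
  rw [mul_sub, mul_div_cancel₀ _ hn'.ne'] at h
  linarith

end Spectral

/-- The decomposition with a single bag. -/
def trivialTreeDecomp {V : Type} (G : SimpleGraph V) : TreeDecomp G where
  ι := Unit
  tree := ⊥
  isTree := SimpleGraph.IsTree.of_subsingleton
  bag := fun _ => Set.univ
  bag_cover := fun _ => ⟨(), trivial⟩
  bag_edge := fun _ _ _ => ⟨(), trivial, trivial⟩
  bag_conn := fun _ => by
    have : Nonempty {t : Unit | True} := ⟨⟨(), trivial⟩⟩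
    exact (SimpleGraph.IsTree.of_subsingleton (V := {t : Unit | True})).connected

theorem statement_1 {V : Type} [Fintype V] [DecidableEq V]
    (G : SimpleGraph V) [DecidableRel G.Adj] (d : ℕ) (hd : 1 ≤ d)
    (hreg : G.IsRegularOfDegree d) :
    ⌊(Fintype.card V : ℝ) * ((d : ℝ) - graphLambda G) / (8 * d)⌋ ≤ (treewidth G : ℤ) := by
  rcases isEmpty_or_nonempty V with hV | ⟨⟨a⟩⟩
  · simp
  have hn : 0 < Fintype.card V := Fintype.card_pos_iff.2 ⟨a⟩
  have hn' : (0 : ℝ) < Fintype.card V := by exact_mod_cast hn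
  have hd' : (1 : ℝ) ≤ d := by exact_mod_cast hd
  obtain ⟨b, hab⟩ : ∃ b, G.Adj a b := by
    rw [← SimpleGraph.degree_pos_iff_exists_adj, hreg a]
    omega
  have hlam := neg_one_le_graphLambda G hab.ne
  -- `sInf` is attained because the trivial decomposition exists.
  obtain ⟨D, hD⟩ : ∃ D : TreeDecomp G, D.width = treewidth G :=
    Nat.sInf_mem (s := {k : ℕ | ∃ D : TreeDecomp G, D.width = k})
      ⟨_, trivialTreeDecomp G, rfl⟩
  -- The supremum of bag sizes is a genuine maximum, even if the tree is infinite.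
  have hbdd : BddAbove (Set.range fun t => (D.bag t).ncard) := by
    refine ⟨Fintype.card V, ?_⟩
    rintro _ ⟨t, rfl⟩
    rw [← Nat.card_eq_fintype_card]
    exact Set.ncard_le_card _
  set k := ⨆ t, (D.bag t).ncard with hk
  have hbag : ∀ t, (D.bag t).ncard ≤ k := fun t => le_ciSup hbdd t
  have hk1 : 1 ≤ k := by
    obtain ⟨t, ht⟩ := D.bag_cover a
    exact le_trans ((Set.ncard_pos (Set.toFinite _)).2 ⟨a, ht⟩) (hbag t)
  have hwidth : (treewidth G : ℤ) = k - 1 := by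
    rw [← hD, TreeDecomp.width, ← hk]
    omega
  rw [hwidth, Int.le_sub_one_iff, Int.floor_lt, div_lt_iff₀ (by positivity)]
  by_contra! hcon
  rw [Int.cast_natCast] at hcon
  have hk1' : (1 : ℝ) ≤ k := by exact_mod_cast hk1
  -- As `d - λ ≤ 2d`, a maximum bag size violating the bound is at most `n / 4`.
  have hk4 : 4 * (k : ℝ) ≤ Fintype.card V := by
    have h1 : (d : ℝ) - graphLambda G ≤ 2 * d := by linarith
    have h2 := mul_le_mul_of_nonneg_left h1 hn'.le
    have h3 : (2 * d : ℝ) * (4 * k) ≤ (2 * d) * Fintype.card V := by linarith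
    exact le_of_mul_le_mul_left h3 (by linarith)
  have hk4' : 4 * k ≤ Fintype.card V := by exact_mod_cast hk4
  obtain ⟨t, c, hc1, hc2⟩ := exists_centroid_bag D
  classical
  let X : Finset V := (D.bag t).toFinset
  have hXk : X.card ≤ k := by
    rw [← Set.ncard_eq_toFinset_card']
    exact hbag t
  have hXc : X.card + Xᶜ.card = Fintype.card V := Finset.card_add_card_compl X
  obtain ⟨A, B, hAY, hBY, hAB, hU, hA, hB, hcol⟩ := exists_balanced Xᶜ c (Fintype.card V)
    (by omega) (fun i F hF => hc2 i F fun v hv => by simpa [X] using hF v hv)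
  have hsep := separator_bound_s1 G hreg (X := X) hAB
    (fun v => by
      by_cases hv : v ∈ X
      · exact Or.inr (Or.inr hv)
      · have : v ∈ A ∪ B := by rw [hU]; simpa using hv
        rcases Finset.mem_union.1 this with h | h
        · exact Or.inl h
        · exact Or.inr (Or.inl h))
    (fun u hu v hv huv => hcol u hu v hv (hc1 u v (by simpa [X] using hAY hu)
      (by simpa [X] using hBY hv) huv)) hn hA hB
  have hXk' : (X.card : ℝ) ≤ k := by exact_mod_cast hXk
  have h5 : 4 * (d : ℝ) * X.card ≤ 4 * d * k := mul_le_mul_of_nonneg_left hXk' (by positivity)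
  nlinarith

end
end

section
/- Let G be a finite simple graph on n ≥ 8 vertices and let S be a 1/2-separator of G with |S| ≤ n/8. Then there exists a set A of vertices of G, disjoint from S, with n/8 ≤ |A| ≤ n/2, such that every neighbor of every vertex of A lies in A ∪ S; consequently h_out(G) ≤ 8|S|/n. -/
/-!
STATEMENT 4: Let G be a finite simple graph on n ≥ 8 vertices and let S be a 1/2-separator
of G with |S| ≤ n/8.  Then there exists a set A of vertices of G, disjoint from S, with
n/8 ≤ |A| ≤ n/2, such that every neighbor of every vertex of A lies in A ∪ S; consequently
h_out(G) ≤ 8|S|/n.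
-/

/-!
Call a vertex set disjoint from `S` closed if all neighbors of its vertices lie in it or in `S`
(`IsClosedOff`). Closed sets are the unions of components of `G - S`, and they are stable under
union. Let `A` be an inclusion-maximal closed set with at most `n/2` vertices. If `|A| < n/8`,
then `A ∪ S` is not everything because `|S| ≤ n/8`, so a vertex `v` lies outside it; let `K` be
the component of `v` in `G - S`, which has at most `n/2` vertices because `S` is a separator. By
maximality `A ∪ K` has more than `n/2` vertices, hence `K` has more than `3n/8` and is itself the
desired set (`exists_isClosedOff`). The bound on the expansion follows because the outer boundary
of a closed set is contained in `S`.
-/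

noncomputable section

/-- The outer boundary of a vertex set `A`: the vertices outside `A` having a neighbor in `A`. -/
def outerBoundary {V : Type} (G : SimpleGraph V) (A : Set V) : Set V :=
  {v | v ∉ A ∧ ∃ u ∈ A, G.Adj u v}

/-- The outer vertex expansion `h_out(G)`: the minimum over vertex sets `A` with
`1 ≤ |A| ≤ n/2` of `|∂A| / |A|`. -/
noncomputable def vertexExpansion {V : Type} [Fintype V] (G : SimpleGraph V) : ℝ :=
  sInf {x : ℝ | ∃ A : Set V, 1 ≤ A.ncard ∧ (A.ncard : ℝ) ≤ (Fintype.card V : ℝ) / 2 ∧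
    x = ((outerBoundary G A).ncard : ℝ) / (A.ncard : ℝ)}

/-- `A` avoids `S` and no edge leaves `A` except into `S`, that is, `A` is a union of
connected components of `G - S`. -/
def IsClosedOff {V : Type} (G : SimpleGraph V) (S A : Set V) : Prop :=
  Disjoint A S ∧ ∀ u ∈ A, ∀ v : V, G.Adj u v → v ∈ A ∪ S

theorem IsClosedOff.union {V : Type} {G : SimpleGraph V} {S A B : Set V}
    (hA : IsClosedOff G S A) (hB : IsClosedOff G S B) : IsClosedOff G S (A ∪ B) := by
  refine ⟨Set.disjoint_union_left.2 ⟨hA.1, hB.1⟩, ?_⟩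
  rintro u (hu | hu) v huv
  · rcases hA.2 u hu v huv with h | h
    exacts [Or.inl (Or.inl h), Or.inr h]
  · rcases hB.2 u hu v huv with h | h
    exacts [Or.inl (Or.inr h), Or.inr h]

theorem isClosedOff_component {V : Type} (G : SimpleGraph V) (S : Set V)
    (K : (G.induce Sᶜ).ConnectedComponent) :
    IsClosedOff G S (Subtype.val '' K.supp) := by
  constructor
  · rw [Set.disjoint_left]
    rintro _ ⟨u, -, rfl⟩
    exact u.2
  · rintro _ ⟨u, hu, rfl⟩ v huv
    by_cases hv : v ∈ S
    · exact Or.inr hv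
    · refine Or.inl ⟨⟨v, hv⟩, ?_, rfl⟩
      have hadj : (G.induce Sᶜ).Adj u ⟨v, hv⟩ := huv
      exact K.mem_supp_of_adj_mem_supp hu hadj

/-- The desired set is either an inclusion-maximal closed set with at most `n/2` vertices or a
single component of `G - S`. -/
theorem exists_isClosedOff {V : Type} [Fintype V] (G : SimpleGraph V)
    (hn : 8 ≤ Fintype.card V) (S : Set V)
    (hS : IsAlphaSeparator G (1/2) S)
    (hScard : (S.ncard : ℝ) ≤ (Fintype.card V : ℝ) / 8) :
    ∃ A : Set V, IsClosedOff G S A ∧ (Fintype.card V : ℝ) / 8 ≤ (A.ncard : ℝ) ∧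
      (A.ncard : ℝ) ≤ (Fintype.card V : ℝ) / 2 := by
  have hn' : (8 : ℝ) ≤ Fintype.card V := by exact_mod_cast hn
  have hpos : (0 : ℝ) ≤ (Fintype.card V : ℝ) / 2 := by positivity
  obtain ⟨A, ⟨hA, hAcard⟩, hmax⟩ :=
    (Set.toFinite {A : Set V | IsClosedOff G S A ∧
      (A.ncard : ℝ) ≤ (Fintype.card V : ℝ) / 2}).exists_maximal
      ⟨∅, ⟨Set.empty_disjoint S, by simp⟩, by simpa using hpos⟩
  by_cases hlarge : (Fintype.card V : ℝ) / 8 ≤ (A.ncard : ℝ)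
  · exact ⟨A, hA, hlarge, hAcard⟩
  push Not at hlarge
  obtain ⟨v, hv⟩ : ∃ v, v ∉ A ∪ S := by
    by_contra! hall
    have h1 : A ∪ S = Set.univ := Set.eq_univ_of_forall hall
    have h2 := Set.ncard_union_le A S
    rw [h1, Set.ncard_univ, Nat.card_eq_fintype_card] at h2
    have h3 : (Fintype.card V : ℝ) ≤ A.ncard + S.ncard := by exact_mod_cast h2
    linarith
  have hvA : v ∉ A := fun h => hv (Or.inl h)
  have hvS : v ∈ Sᶜ := fun h => hv (Or.inr h)
  let K := (G.induce Sᶜ).connectedComponentMk ⟨v, hvS⟩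
  have hKcard : ((Subtype.val '' K.supp : Set V).ncard : ℝ) ≤ (Fintype.card V : ℝ) / 2 := by
    rw [Set.ncard_image_of_injective _ Subtype.val_injective]
    have := hS K
    linarith
  have hK := isClosedOff_component G S K
  have hvK : v ∈ (Subtype.val '' K.supp : Set V) := ⟨⟨v, hvS⟩, rfl, rfl⟩
  refine ⟨_, hK, ?_, hKcard⟩
  -- If the component also had fewer than `n/8` vertices, the union would contradict maximality.
  by_contra! hsmall
  have hunion : ((A ∪ Subtype.val '' K.supp).ncard : ℝ) ≤
      A.ncard + (Subtype.val '' K.supp : Set V).ncard := by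
    exact_mod_cast Set.ncard_union_le _ _
  exact hvA (hmax ⟨hA.union hK, by linarith⟩ Set.subset_union_left (Or.inr hvK))

theorem statement_4 {V : Type} [Fintype V] (G : SimpleGraph V)
    (hn : 8 ≤ Fintype.card V) (S : Set V)
    (hS : IsAlphaSeparator G (1/2) S)
    (hScard : (S.ncard : ℝ) ≤ (Fintype.card V : ℝ) / 8) :
    (∃ A : Set V, Disjoint A S ∧
      (Fintype.card V : ℝ) / 8 ≤ (A.ncard : ℝ) ∧
      (A.ncard : ℝ) ≤ (Fintype.card V : ℝ) / 2 ∧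
      (∀ u ∈ A, ∀ v : V, G.Adj u v → v ∈ A ∪ S)) ∧
    vertexExpansion G ≤ 8 * (S.ncard : ℝ) / (Fintype.card V : ℝ) := by
  have hn' : (8 : ℝ) ≤ Fintype.card V := by exact_mod_cast hn
  obtain ⟨A, ⟨hdisj, hnbr⟩, hlo, hhi⟩ := exists_isClosedOff G hn S hS hScard
  refine ⟨⟨A, hdisj, hlo, hhi, hnbr⟩, ?_⟩
  have hA1 : (1 : ℝ) ≤ A.ncard := by linarith
  have hbdd : BddBelow {x : ℝ | ∃ A : Set V, 1 ≤ A.ncard ∧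
      (A.ncard : ℝ) ≤ (Fintype.card V : ℝ) / 2 ∧
      x = ((outerBoundary G A).ncard : ℝ) / (A.ncard : ℝ)} := by
    refine ⟨0, ?_⟩
    rintro x ⟨B, -, -, rfl⟩
    positivity
  refine (csInf_le hbdd ⟨A, by exact_mod_cast hA1, hhi, rfl⟩).trans ?_
  have hsub : outerBoundary G A ⊆ S := by
    rintro v ⟨hv, u, hu, huv⟩
    exact (hnbr u hu v huv).resolve_left hv
  have hle : ((outerBoundary G A).ncard : ℝ) ≤ S.ncard := by
    exact_mod_cast Set.ncard_le_ncard hsub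
  calc ((outerBoundary G A).ncard : ℝ) / A.ncard
      ≤ S.ncard / ((Fintype.card V : ℝ) / 8) := by gcongr
    _ = 8 * (S.ncard : ℝ) / (Fintype.card V : ℝ) := by
      rw [div_div_eq_mul_div, mul_comm]

end
end

section
/- Let G be a finite simple graph on n ≥ 1 vertices and let S be a set of vertices of G with |S| ≤ 3n/4 such that every connected component of the induced subgraph of G on V(G) ∖ S has at most n/2 vertices. Then there exists a set A of vertices that is a union of connected components of the induced subgraph of G on V(G) ∖ S and satisfies n/4 ≤ |A| ≤ 3n/4. -/
/-!
Add the components of `G - S` to the union one at a time. The size starts at `0 < n/4`, ends at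
`n - |S| ≥ n/4`, and grows by at most `n/2` at each step, so the first time it reaches `n/4` it is
at most `n/4 + n/2 = 3n/4`.
-/

theorem statement_5 {V : Type} [Fintype V] (G : SimpleGraph V)
    (hn : 1 ≤ Fintype.card V) (S : Set V)
    (hScard : (S.ncard : ℝ) ≤ 3 * (Fintype.card V : ℝ) / 4)
    (hcomp : ∀ K : (G.induce Sᶜ).ConnectedComponent,
      (K.supp.ncard : ℝ) ≤ (Fintype.card V : ℝ) / 2) :
    ∃ A : Set V,
      (∃ 𝒦 : Set ((G.induce Sᶜ).ConnectedComponent),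
        A = Subtype.val '' (⋃ K ∈ 𝒦, K.supp)) ∧
      (Fintype.card V : ℝ) / 4 ≤ (A.ncard : ℝ) ∧
      (A.ncard : ℝ) ≤ 3 * (Fintype.card V : ℝ) / 4 := by
  classical
  set n : ℝ := (Fintype.card V : ℝ) with hndef
  have hn' : (1 : ℝ) ≤ n := by rw [hndef]; exact_mod_cast hn
  let U : Set ((G.induce Sᶜ).ConnectedComponent) → Set V :=
    fun 𝒦 => Subtype.val '' (⋃ K ∈ 𝒦, K.supp)
  have key : ∀ 𝒦 : Set ((G.induce Sᶜ).ConnectedComponent),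
      ((U 𝒦).ncard : ℝ) < n / 4 ∨
        ∃ 𝒦', n / 4 ≤ ((U 𝒦').ncard : ℝ) ∧ ((U 𝒦').ncard : ℝ) ≤ 3 * n / 4 := by
    intro 𝒦
    induction 𝒦, Set.toFinite 𝒦 using Set.Finite.induction_on with
    | empty =>
      left
      simp only [U, Set.mem_empty_iff_false, Set.iUnion_of_empty, Set.iUnion_empty,
        Set.image_empty, Set.ncard_empty, Nat.cast_zero]
      linarith
    | @insert K 𝒦 _ _ ih =>
      rcases ih with ih | ih
      · have hU : U (insert K 𝒦) = Subtype.val '' K.supp ∪ U 𝒦 := by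
          simp only [U, Set.biUnion_insert, Set.image_union]
        have hle : ((U (insert K 𝒦)).ncard : ℝ) ≤ (K.supp.ncard : ℝ) + ((U 𝒦).ncard : ℝ) := by
          rw [hU, ← Set.ncard_image_of_injective K.supp Subtype.val_injective]
          exact_mod_cast Set.ncard_union_le _ _
        have hK := hcomp K
        rcases lt_or_ge ((U (insert K 𝒦)).ncard : ℝ) (n / 4) with h | h
        · exact Or.inl h
        · exact Or.inr ⟨insert K 𝒦, h, by linarith⟩
      · exact Or.inr ih
  have huniv : U Set.univ = Sᶜ := by
    ext v
    simp [U]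
  have hsum : (S.ncard : ℝ) + (Sᶜ.ncard : ℝ) = n := by
    rw [hndef, ← Nat.card_eq_fintype_card]
    exact_mod_cast Set.ncard_add_ncard_compl S
  rcases key Set.univ with h | ⟨𝒦, h₁, h₂⟩
  · rw [huniv] at h
    linarith
  · exact ⟨U 𝒦, ⟨𝒦, rfl⟩, h₁, h₂⟩
end

section
/- Let δ1, δ2 be integers with 1 ≤ δ1 ≤ δ2, let H be the δ1×δ2 grid graph, let 0 < α < 1, and let β be a real number with 0 < β < min{1, (1−α)·δ2/δ1}. Then every α-separator of H has more than β·δ1 vertices; equivalently, for every vertex set C of H with |C| ≤ β·δ1, some connected component of the induced subgraph of H on V(H) ∖ C has more than α·δ1·δ2 vertices. -/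
/-!
Call a row or a column of the grid clean if it avoids `C`. Since `|C| ≤ β δ₁ < δ₁`, some row is
clean, and at least `δ₂ - |C|` columns are clean. Every clean column meets the clean row, so all
clean columns lie in one component of the complement of `C`
(`exists_component_of_ncard_lt`). That component therefore has at least
`δ₁ (δ₂ - |C|) ≥ δ₁ δ₂ - β δ₁² > α δ₁ δ₂` vertices, the last step because
`β δ₁ < (1 - α) δ₂`.
-/

/-!
STATEMENT 6: Let δ1, δ2 be integers with 1 ≤ δ1 ≤ δ2, let H be the δ1×δ2 grid graph, let
0 < α < 1, and let β be a real number with 0 < β < min{1, (1−α)·δ2/δ1}.  Then every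
α-separator of H has more than β·δ1 vertices; equivalently, for every vertex set C of H
with |C| ≤ β·δ1, some connected component of the induced subgraph of H on V(H) ∖ C has
more than α·δ1·δ2 vertices.
-/

/-- The `δ₁ × δ₂` grid graph: vertices are pairs, two vertices being adjacent iff they
differ by exactly 1 in exactly one coordinate. -/
def gridGraph (δ₁ δ₂ : ℕ) : SimpleGraph (Fin δ₁ × Fin δ₂) :=
  SimpleGraph.fromRel (fun a b =>
    (a.1 = b.1 ∧ (b.2.val = a.2.val + 1 ∨ a.2.val = b.2.val + 1)) ∨
    (a.2 = b.2 ∧ (b.1.val = a.1.val + 1 ∨ a.1.val = b.1.val + 1)))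

lemma reachable_of_consecutive {V : Type*} (G : SimpleGraph V) {n : ℕ} (f : Fin n → V)
    (hf : ∀ i j : Fin n, j.val = i.val + 1 → G.Adj (f i) (f j)) (i j : Fin n) :
    G.Reachable (f i) (f j) := by
  have hn : 0 < n := i.pos
  have key : ∀ (k : ℕ) (hk : k < n), G.Reachable (f ⟨0, hn⟩) (f ⟨k, hk⟩) := by
    intro k
    induction k with
    | zero => exact fun _ => SimpleGraph.Reachable.refl _
    | succ k ih =>
      intro hk
      exact (ih (by omega)).trans (hf ⟨k, by omega⟩ ⟨k + 1, hk⟩ rfl).reachable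
  exact (key i i.isLt).symm.trans (key j j.isLt)

/-- If `C` has fewer vertices than the grid has rows, the union of the columns avoiding `C` lies
in a single component of the complement. -/
lemma exists_component_of_ncard_lt {m n : ℕ} (hn : 0 < n) (C : Set (Fin m × Fin n))
    (hC : C.ncard < m) :
    ∃ K : ((gridGraph m n).induce Cᶜ).ConnectedComponent,
      m * (n - C.ncard) ≤ K.supp.ncard := by
  obtain ⟨r, hr⟩ : ∃ r : Fin m, r ∉ Prod.fst '' C := by
    by_contra! h
    have h1 : Prod.fst '' C = Set.univ := Set.eq_univ_of_forall h
    have h2 := Set.ncard_image_le (f := Prod.fst) C.toFinite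
    rw [h1, Set.ncard_univ, Nat.card_fin] at h2
    omega
  have hrow : ∀ c : Fin n, (r, c) ∈ Cᶜ := fun c h => hr ⟨_, h, rfl⟩
  refine ⟨SimpleGraph.connectedComponentMk _ ⟨(r, ⟨0, hn⟩), hrow _⟩, ?_⟩
  set K := ((gridGraph m n).induce Cᶜ).connectedComponentMk ⟨(r, ⟨0, hn⟩), hrow _⟩ with hK
  have hsub : (Set.univ : Set (Fin m)) ×ˢ (Prod.snd '' C)ᶜ ⊆ Subtype.val '' K.supp := by
    rintro ⟨i, c⟩ ⟨-, hc⟩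
    have hcol : ∀ i : Fin m, (i, c) ∈ Cᶜ := fun i h => hc ⟨_, h, rfl⟩
    refine ⟨⟨(i, c), hcol i⟩, ?_, rfl⟩
    rw [SimpleGraph.ConnectedComponent.mem_supp_iff, hK, SimpleGraph.ConnectedComponent.eq]
    have vert := reachable_of_consecutive ((gridGraph m n).induce Cᶜ)
      (fun i : Fin m => ⟨(i, c), hcol i⟩) (by
        intro i j hij
        have hne : i ≠ j := by rintro rfl; omega
        simp [gridGraph, hij, hne]) i r
    have horiz := reachable_of_consecutive ((gridGraph m n).induce Cᶜ)
      (fun c : Fin n => ⟨(r, c), hrow c⟩) (by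
        intro i j hij
        have hne : i ≠ j := by rintro rfl; omega
        simp [gridGraph, hij, hne]) c ⟨0, hn⟩
    exact vert.trans horiz
  have h1 := Set.ncard_le_ncard hsub
  rw [Set.ncard_image_of_injective _ Subtype.val_injective, Set.ncard_prod, Set.ncard_univ,
    Nat.card_fin, Set.ncard_compl, Nat.card_fin] at h1
  have h2 := Set.ncard_image_le (f := Prod.snd) C.toFinite
  exact (Nat.mul_le_mul_left m (by omega)).trans h1

theorem statement_6 (δ₁ δ₂ : ℕ) (h1 : 1 ≤ δ₁) (h12 : δ₁ ≤ δ₂) (α β : ℝ)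
    (hα0 : 0 < α) (hα1 : α < 1) (hβ0 : 0 < β)
    (hβ : β < min 1 ((1 - α) * (δ₂ : ℝ) / (δ₁ : ℝ))) :
    (∀ C : Set (Fin δ₁ × Fin δ₂),
      IsAlphaSeparator (gridGraph δ₁ δ₂) α C → β * (δ₁ : ℝ) < (C.ncard : ℝ)) ∧
    (∀ C : Set (Fin δ₁ × Fin δ₂), (C.ncard : ℝ) ≤ β * (δ₁ : ℝ) →
      ∃ K : ((gridGraph δ₁ δ₂).induce Cᶜ).ConnectedComponent,
        α * (δ₁ : ℝ) * (δ₂ : ℝ) < (K.supp.ncard : ℝ)) := by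
  have hm : (0 : ℝ) < δ₁ := by exact_mod_cast h1
  have main : ∀ C : Set (Fin δ₁ × Fin δ₂), (C.ncard : ℝ) ≤ β * (δ₁ : ℝ) →
      ∃ K : ((gridGraph δ₁ δ₂).induce Cᶜ).ConnectedComponent,
        α * (δ₁ : ℝ) * (δ₂ : ℝ) < (K.supp.ncard : ℝ) := by
    intro C hC
    have hb1 : β < 1 := hβ.trans_le (min_le_left _ _)
    have hb2 : β * δ₁ < (1 - α) * δ₂ := (lt_div_iff₀ hm).1 (hβ.trans_le (min_le_right _ _))
    have hlt : C.ncard < δ₁ := by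
      have : (C.ncard : ℝ) < δ₁ := by nlinarith
      exact_mod_cast this
    obtain ⟨K, hK⟩ := exists_component_of_ncard_lt (h1.trans h12) C hlt
    refine ⟨K, ?_⟩
    have hK' : (δ₁ : ℝ) * (δ₂ - C.ncard) ≤ K.supp.ncard := by
      rw [← Nat.cast_sub (hlt.le.trans h12)]
      exact_mod_cast hK
    have : (δ₁ : ℝ) * (α * δ₂) < δ₁ * (δ₂ - C.ncard) :=
      mul_lt_mul_of_pos_left (by linarith) hm
    linarith
  refine ⟨fun C hsep => ?_, main⟩
  by_contra! hC
  obtain ⟨K, hK⟩ := main C hC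
  have := hsep K
  simp only [Fintype.card_prod, Fintype.card_fin, Nat.cast_mul] at this
  linarith
end

section
/- Let δ1, δ2 be integers with 1 ≤ δ1 ≤ δ2 and let H be the δ1×δ2 grid graph. For every set C of vertices of H with |C| < δ1, the induced subgraph of H on V(H) ∖ C has a connected component with at least δ1·(δ2 − |C|) vertices. -/
/-- Any two values of a sequence with adjacent consecutive terms lie in the same component. -/
lemma reachable_of_path {V : Type*} (G : SimpleGraph V) {n : ℕ} (f : Fin n → V)
    (hf : ∀ a b : Fin n, b.val = a.val + 1 → G.Adj (f a) (f b)) (a b : Fin n) :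
    G.Reachable (f a) (f b) := by
  let φ : SimpleGraph.pathGraph n →g G :=
    { toFun := f
      map_rel' := by
        intro x y h
        rcases SimpleGraph.pathGraph_adj.1 h with h | h
        · exact hf _ _ h.symm
        · exact (hf _ _ h.symm).symm }
  exact (SimpleGraph.pathGraph_preconnected n a b).map φ

/-- Each vertex of `C` lies in exactly one fibre of `p`. For `p` a coordinate projection of the grid,
the fibres are the rows or the columns. -/
lemma le_ncard_free {V : Type*} [Finite V] {n : ℕ} (p : V → Fin n) (C : Set V) :
    n - C.ncard ≤ {j | ∀ v, p v = j → v ∉ C}.ncard := by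
  have h : {j | ∀ v, p v = j → v ∉ C} = (p '' C)ᶜ := by
    ext j
    simp only [Set.mem_ofPred_eq, Set.mem_compl_iff, Set.mem_image]
    grind
  have h2 := Set.ncard_add_ncard_compl (p '' C)
  have h3 := Set.ncard_image_le (f := p) C.toFinite
  rw [Nat.card_eq_fintype_card, Fintype.card_fin] at h2
  rw [h]
  omega

lemma exists_line_free {V : Type*} [Finite V] {n : ℕ} (p : V → Fin n) (C : Set V)
    (hC : C.ncard < n) : ∃ j, ∀ v, p v = j → v ∉ C := by
  have h := le_ncard_free p C
  exact Set.nonempty_of_ncard_ne_zero (s := {j | ∀ v, p v = j → v ∉ C}) (by omega)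

theorem statement_7 (δ₁ δ₂ : ℕ) (h1 : 1 ≤ δ₁) (h12 : δ₁ ≤ δ₂)
    (C : Set (Fin δ₁ × Fin δ₂)) (hC : C.ncard < δ₁) :
    ∃ K : ((gridGraph δ₁ δ₂).induce Cᶜ).ConnectedComponent,
      δ₁ * (δ₂ - C.ncard) ≤ K.supp.ncard := by
  obtain ⟨r, hr⟩ := exists_line_free Prod.fst C hC
  have hF := le_ncard_free Prod.snd C
  set F : Set (Fin δ₂) := {j | ∀ v : Fin δ₁ × Fin δ₂, v.2 = j → v ∉ C} with hFdef
  let G := (gridGraph δ₁ δ₂).induce Cᶜ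
  have hrow : ∀ j j' : Fin δ₂,
      G.Reachable ⟨(r, j), hr _ rfl⟩ ⟨(r, j'), hr _ rfl⟩ :=
    reachable_of_path G (fun j => ⟨(r, j), hr _ rfl⟩) (by
      intro a b h
      simp only [G, SimpleGraph.comap_adj, Function.Embedding.subtype_apply, gridGraph,
        SimpleGraph.fromRel_adj]
      refine ⟨fun e => ?_, Or.inl (Or.inl ⟨by trivial, Or.inl h⟩)⟩
      have := congrArg (fun v => v.2.val) e
      simp only at this
      omega)
  have hcol : ∀ j (hj : j ∈ F) (i i' : Fin δ₁),
      G.Reachable ⟨(i, j), hj _ rfl⟩ ⟨(i', j), hj _ rfl⟩ := fun j hj =>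
    reachable_of_path G (fun i => ⟨(i, j), hj _ rfl⟩) (by
      intro a b h
      simp only [G, SimpleGraph.comap_adj, Function.Embedding.subtype_apply, gridGraph,
        SimpleGraph.fromRel_adj]
      refine ⟨fun e => ?_, Or.inl (Or.inr ⟨by trivial, Or.inl h⟩)⟩
      have := congrArg (fun v => v.1.val) e
      simp only at this
      omega)
  let j₀ : Fin δ₂ := ⟨0, by omega⟩
  refine ⟨G.connectedComponentMk ⟨(r, j₀), hr _ rfl⟩, ?_⟩
  set K := G.connectedComponentMk ⟨(r, j₀), hr _ rfl⟩ with hK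
  have hsub : (Set.univ : Set (Fin δ₁)) ×ˢ F ⊆ Subtype.val '' K.supp := by
    rintro ⟨i, j⟩ ⟨-, hj⟩
    refine ⟨⟨(i, j), hj _ rfl⟩, ?_, rfl⟩
    rw [SimpleGraph.ConnectedComponent.mem_supp_iff, hK, SimpleGraph.ConnectedComponent.eq]
    exact (hcol j hj i r).trans (hrow j j₀)
  calc δ₁ * (δ₂ - C.ncard) ≤ δ₁ * F.ncard := Nat.mul_le_mul_left _ hF
    _ = ((Set.univ : Set (Fin δ₁)) ×ˢ F).ncard := by
      rw [Set.ncard_prod, Set.ncard_univ, Nat.card_eq_fintype_card, Fintype.card_fin]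
    _ ≤ (Subtype.val '' K.supp).ncard := Set.ncard_le_ncard hsub (Set.toFinite _)
    _ = K.supp.ncard := Set.ncard_image_of_injective _ Subtype.val_injective
end

section
/- Every finite simple graph G on n vertices with treewidth at most k has a 1/4-separator of size at most 4(k+1). -/
/-!
Fix a tree decomposition with bags of size at most `k + 1` and root its tree. The nodes whose bags
contain a given vertex `v` form a subtree, which has a unique highest node, the top node of `v`
(`exists_top`). For a set `W` of more than `n / 4` vertices, choose a deepest node `t` such that
the set `D` of vertices of `W` with top node at or below `t` still has more than `n / 4` elements.
Adjacent vertices have comparable top nodes. Hence removing the bag of `t` separates the rest of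
`D` from the rest of `W`, and a connected subset of `D` avoiding that bag has all its top nodes
below a single node strictly deeper than `t`, so by the choice of `t` it has at most `n / 4`
vertices (`exists_cut`). Replacing `W` by `W \ D` and repeating, at most four bags are used before
`W` is exhausted, and their union is the separator (`exists_sep`).
-/

/-!
STATEMENT 8: Every finite simple graph G on n vertices with treewidth at most k has a
1/4-separator of size at most 4(k+1).
-/

noncomputable section

/-! ### Ancestors in a rooted tree -/

namespace SepAux

open SimpleGraph

/-- In a tree rooted at `r`, the node `a` is an ancestor of `b` (possibly `b` itself) when it lies
on the path from `r` to `b`; uniqueness of that path makes the universal quantifier harmless. -/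
def Anc {ι : Type} (T : SimpleGraph ι) (r a b : ι) : Prop :=
  ∀ p : T.Walk r b, p.IsPath → a ∈ p.support

section Tree

variable {ι : Type} {T : SimpleGraph ι} {r : ι}

lemma anc_iff (hT : T.IsTree) {a b : ι} {p : T.Walk r b} (hp : p.IsPath) :
    Anc T r a b ↔ a ∈ p.support :=
  ⟨fun h => h p hp, fun h _ hq => (hT.existsUnique_path r b).unique hp hq ▸ h⟩

lemma anc_root (b : ι) : Anc T r r b := fun p _ => p.start_mem_support

lemma anc_refl (b : ι) : Anc T r b b := fun p _ => p.end_mem_support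

lemma Anc.trans (hT : T.IsTree) {a b c : ι} (hab : Anc T r a b) (hbc : Anc T r b c) :
    Anc T r a c := by
  obtain ⟨p, hp, -⟩ := hT.existsUnique_path r c
  obtain ⟨q, s, hq, -, rfl⟩ := hp.mem_support_iff_exists_append.1 (hbc p hp)
  exact (anc_iff hT hp).2 ((Walk.mem_support_append_iff _ _).2 (Or.inl (hab q hq)))

/-- Two ancestors of a common node are comparable. -/
lemma anc_total (hT : T.IsTree) {a b c : ι} (hac : Anc T r a c) (hbc : Anc T r b c) :
    Anc T r a b ∨ Anc T r b a := by
  obtain ⟨p, hp, -⟩ := hT.existsUnique_path r c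
  obtain ⟨q, s, hq, hs, rfl⟩ := hp.mem_support_iff_exists_append.1 (hac p hp)
  rcases (Walk.mem_support_append_iff _ _).1 (hbc _ hp) with hb | hb
  · exact Or.inr ((anc_iff hT hq).2 hb)
  · left
    obtain ⟨s₁, s₂, -, -, rfl⟩ := hs.mem_support_iff_exists_append.1 hb
    rw [Walk.append_assoc] at hp
    exact (anc_iff hT hp.of_append_left).2
      ((Walk.mem_support_append_iff _ _).2 (Or.inl q.end_mem_support))

lemma dist_eq (hT : T.IsTree) {a : ι} {p : T.Walk r a} (hp : p.IsPath) :
    p.length = T.dist r a := by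
  obtain ⟨q, hq, hl⟩ := hT.connected.exists_path_of_dist r a
  rw [(hT.existsUnique_path r a).unique hp hq, hl]

lemma Anc.dist_le (hT : T.IsTree) {a b : ι} (h : Anc T r a b) : T.dist r a ≤ T.dist r b := by
  obtain ⟨p, hp, -⟩ := hT.existsUnique_path r b
  obtain ⟨q, s, hq, -, rfl⟩ := hp.mem_support_iff_exists_append.1 (h p hp)
  rw [← dist_eq hT hp, ← dist_eq hT hq, Walk.length_append]
  omega

lemma Anc.eq_of_dist_le (hT : T.IsTree) {a b : ι} (h : Anc T r a b)
    (hd : T.dist r b ≤ T.dist r a) : a = b := by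
  obtain ⟨p, hp, -⟩ := hT.existsUnique_path r b
  obtain ⟨q, s, hq, -, rfl⟩ := hp.mem_support_iff_exists_append.1 (h p hp)
  rw [← dist_eq hT hp, ← dist_eq hT hq, Walk.length_append] at hd
  exact Walk.eq_of_length_eq_zero (p := s) (by omega)

/-- A connected set of nodes has a top node: it is an ancestor of every node of the set, and the
set contains everything between its top node and any of its members. -/
lemma exists_top (hT : T.IsTree) (r : ι) {X : Set ι} (hX : (T.induce X).Connected) :
    ∃ a ∈ X, ∀ s ∈ X, Anc T r a s ∧ ∀ t, Anc T r a t → Anc T r t s → t ∈ X := by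
  classical
  obtain ⟨⟨x, hx⟩⟩ := hX.nonempty
  obtain ⟨a, haX, hmin⟩ : ∃ a ∈ X, ∀ b ∈ X, T.dist r a ≤ T.dist r b := by
    have hne : ((T.dist r) '' X).Nonempty := ⟨_, x, hx, rfl⟩
    obtain ⟨a, ha, hal⟩ := Nat.sInf_mem hne
    exact ⟨a, ha, fun b hb => hal ▸ Nat.sInf_le ⟨b, hb, rfl⟩⟩
  refine ⟨a, haX, fun s hs => ?_⟩
  obtain ⟨p, hp, -⟩ := hT.existsUnique_path r a
  obtain ⟨w, hw⟩ := (hX.preconnected ⟨a, haX⟩ ⟨s, hs⟩).exists_isPath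
  obtain ⟨q, hq, hqX⟩ : ∃ q : T.Walk a s, q.IsPath ∧ ∀ y ∈ q.support, y ∈ X := by
    refine ⟨w.map (Embedding.induce X).toHom, hw.map Subtype.val_injective, ?_⟩
    have hsupp : ∀ {b c : X} (w : (T.induce X).Walk b c),
        ∀ y ∈ (w.map (Embedding.induce X).toHom).support, y ∈ X := by
      intro b c w y hy
      rw [Walk.support_map, List.mem_map] at hy
      obtain ⟨z, -, rfl⟩ := hy
      exact z.2
    exact hsupp w
  -- `a` is the only node of `X` on `p`, by minimality, so `p` followed by `q` is again a path.
  have hpa : ∀ y ∈ p.support, y ∈ X → y = a := fun y hy hyX =>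
    Anc.eq_of_dist_le hT ((anc_iff hT hp).2 hy) (hmin y hyX)
  have hpq : (p.append q).IsPath := by
    rw [Walk.isPath_def, Walk.support_append, List.nodup_append]
    have hqn := hq.support_nodup
    refine ⟨hp.support_nodup, hqn.tail, ?_⟩
    rintro y hy _ hy' rfl
    obtain rfl := hpa y hy (hqX y (List.mem_of_mem_tail hy'))
    rw [← Walk.cons_tail_support, List.nodup_cons] at hqn
    exact hqn.1 hy'
  refine ⟨(anc_iff hT hpq).2 ((Walk.mem_support_append_iff _ _).2 (Or.inl p.end_mem_support)),
    fun t hat hts => ?_⟩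
  rcases (Walk.mem_support_append_iff _ _).1 (hts _ hpq) with h | h
  · rwa [← Anc.eq_of_dist_le hT hat (Anc.dist_le hT ((anc_iff hT hp).2 h))]
  · exact hqX t h

end Tree

/-! ### Cutting off one piece along a bag -/

/-- `S` is connected in `G`, phrased without induced subgraphs: a set containing a vertex of `S`
and closed under adjacency inside `S` contains all of `S`. The empty set qualifies. -/
def Cohesive {V : Type} (G : SimpleGraph V) (S : Set V) : Prop :=
  ∀ P : Set V, (∃ x ∈ S, x ∈ P) → (∀ u ∈ S, u ∈ P → ∀ w ∈ S, G.Adj u w → w ∈ P) → S ⊆ P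

/-- If `W` contains more than `n / 4` vertices, then some bag splits off a part `D` of `W` with
more than `n / 4` vertices, of which, after removal of the bag, only pieces of at most `n / 4`
vertices remain. -/
lemma exists_cut {V : Type} [Fintype V] {G : SimpleGraph V} (d : TreeDecomp G) (n : ℕ)
    (W : Set V) (hW : n < 4 * W.ncard) :
    ∃ (t : d.ι) (D : Set V), D ⊆ W ∧ n < 4 * D.ncard ∧
      (∀ u ∈ D, u ∉ d.bag t → ∀ w ∈ W, w ∉ d.bag t → G.Adj u w → w ∈ D) ∧
      ∀ S : Set V, S ⊆ D → Disjoint S (d.bag t) → Cohesive G S → 4 * S.ncard ≤ n := by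
  classical
  have hT := d.isTree
  obtain ⟨r⟩ := hT.connected.nonempty
  choose top htop htop' using fun v => exists_top hT r (d.bag_conn v)
  -- The vertices of `W` whose top node lies below `t`.
  let D : d.ι → Set V := fun t => {v | v ∈ W ∧ Anc d.tree r t (top v)}
  have hDr : D r = W := by
    ext v
    exact ⟨fun h => h.1, fun h => ⟨h, anc_root _⟩⟩
  -- A deepest heavy node exists, although the tree may be infinite: every heavy node is an
  -- ancestor of one of the finitely many top nodes.
  obtain ⟨t, ht, hmax⟩ : ∃ t, n < 4 * (D t).ncard ∧
      ∀ s, n < 4 * (D s).ncard → d.tree.dist r s ≤ d.tree.dist r t := by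
    let M : Set ℕ := {m | ∃ t, n < 4 * (D t).ncard ∧ d.tree.dist r t = m}
    have hne : M.Nonempty := ⟨_, r, by rwa [hDr], rfl⟩
    have hbd : BddAbove M := by
      refine ⟨∑ v, d.tree.dist r (top v), ?_⟩
      rintro _ ⟨s, hs, rfl⟩
      obtain ⟨v, hv⟩ := (Set.ncard_pos (Set.toFinite (D s))).1 (by omega)
      exact (Anc.dist_le hT hv.2).trans
        (Finset.single_le_sum (f := fun v => d.tree.dist r (top v)) (fun _ _ => Nat.zero_le _)
          (Finset.mem_univ v))
    obtain ⟨t, ht, htM⟩ := Nat.sSup_mem hne hbd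
    exact ⟨t, ht, fun s hs => htM ▸ le_csSup hbd ⟨s, hs, rfl⟩⟩
  -- Adjacent vertices share a bag, so both top nodes are ancestors of the same node.
  have hcomp : ∀ u w, G.Adj u w → Anc d.tree r (top u) (top w) ∨ Anc d.tree r (top w) (top u) := by
    intro u w huw
    obtain ⟨s, hus, hws⟩ := d.bag_edge huw
    exact anc_total hT (htop' u s hus).1 (htop' w s hws).1
  refine ⟨t, D t, fun v hv => hv.1, ht, ?_, ?_⟩
  · rintro u ⟨-, htu⟩ - w hwW hwt huw
    refine ⟨hwW, ?_⟩
    rcases hcomp u w huw with h | h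
    · exact htu.trans hT h
    · rcases anc_total hT htu h with hcmp | hcmp
      · exact hcmp
      · -- Otherwise `t` lies between the top node of `w` and a node whose bag contains `w`.
        obtain ⟨s, hus, hws⟩ := d.bag_edge huw
        exact absurd ((htop' w s hws).2 t hcmp (htu.trans hT (htop' u s hus).1)) hwt
  · intro S hSD hSt hS
    rcases S.eq_empty_or_nonempty with rfl | hne
    · simp
    -- All of `S` lies below the highest of its top nodes, which is strictly below `t`.
    obtain ⟨x, hxS, hmin⟩ : ∃ x ∈ S, ∀ y ∈ S, d.tree.dist r (top x) ≤ d.tree.dist r (top y) :=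
      Set.exists_min_image S (fun v => d.tree.dist r (top v)) (Set.toFinite S) hne
    have hSx : S ⊆ D (top x) := by
      refine hS _ ⟨x, hxS, (hSD hxS).1, anc_refl _⟩ ?_
      rintro u - ⟨-, hxu⟩ w hwS huw
      refine ⟨(hSD hwS).1, ?_⟩
      rcases hcomp u w huw with h | h
      · exact hxu.trans hT h
      · rcases anc_total hT hxu h with h' | h'
        · exact h'
        · rw [Anc.eq_of_dist_le hT h' (hmin w hwS)]
          exact anc_refl _
    by_contra hlt
    have hle := Set.ncard_le_ncard hSx (Set.toFinite _)
    have heq := Anc.eq_of_dist_le hT (hSD hxS).2 (hmax (top x) (by omega))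
    exact Set.disjoint_left.1 hSt hxS (heq ▸ htop x)

/-! ### Iterating the cut -/

/-- Each cut removes more than `n / 4` vertices from `W` at the price of one bag, so `m` bags
suffice when `W` has at most `m * n / 4` vertices. -/
lemma exists_sep {V : Type} [Fintype V] {G : SimpleGraph V} (d : TreeDecomp G) (n b : ℕ)
    (hb : ∀ t, (d.bag t).ncard ≤ b) (m : ℕ) :
    ∀ W : Set V, 4 * W.ncard ≤ m * n → ∃ C : Set V, C.ncard ≤ m * b ∧
      ∀ S : Set V, S ⊆ W → Disjoint S C → Cohesive G S → 4 * S.ncard ≤ n := by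
  induction m with
  | zero =>
    intro W hW
    refine ⟨∅, by simp, fun S hS _ _ => ?_⟩
    have := Set.ncard_le_ncard hS (Set.toFinite _)
    omega
  | succ m ih =>
    intro W hW
    by_cases hn : n < 4 * W.ncard
    · obtain ⟨t, D, hDW, hD, hsep, hsmall⟩ := exists_cut d n W hn
      have hcard := Set.ncard_sdiff_add_ncard_of_subset hDW (Set.toFinite _)
      rw [add_mul m 1] at hW
      obtain ⟨C, hC, hCS⟩ := ih (W \ D) (by omega)
      refine ⟨C ∪ d.bag t, ?_, fun S hSW hSC hS => ?_⟩
      · have := Set.ncard_union_le C (d.bag t)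
        have := hb t
        rw [add_mul m 1]
        omega
      · rw [Set.disjoint_union_right] at hSC
        by_cases hSD : ∃ x ∈ S, x ∈ D
        · refine hsmall S (hS D hSD fun u hu huD w hw huw => ?_) hSC.2 hS
          exact hsep u huD (Set.disjoint_left.1 hSC.2 hu) w (hSW hw)
            (Set.disjoint_left.1 hSC.2 hw) huw
        · push Not at hSD
          exact hCS S (fun x hx => ⟨hSW hx, hSD x hx⟩) hSC.1 hS
    · refine ⟨∅, by simp, fun S hS _ _ => ?_⟩
      have := Set.ncard_le_ncard hS (Set.toFinite _)
      omega

lemma cohesive_supp {V : Type} {G : SimpleGraph V} {A : Set V}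
    (K : (G.induce A).ConnectedComponent) : Cohesive G (Subtype.val '' K.supp) := by
  rintro P ⟨_, ⟨x, hx, rfl⟩, hxP⟩ hcl _ ⟨y, hy, rfl⟩
  have hxy : (G.induce A).Reachable x y := ConnectedComponent.exact (hx.trans hy.symm)
  obtain ⟨p⟩ := hxy
  induction p with
  | nil => exact hxP
  | @cons u v w h p ih =>
    have hv : v ∈ K.supp := (ConnectedComponent.sound h.symm.reachable).trans hx
    exact ih hv (hcl _ ⟨u, hx, rfl⟩ hxP _ ⟨v, hv, rfl⟩ h) hy

/-- The one-bag decomposition; its existence means that `treewidth` is the infimum of a nonempty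
set and hence attained. -/
def trivialDecomp {V : Type} (G : SimpleGraph V) : TreeDecomp G where
  ι := Unit
  tree := ⊥
  isTree := IsTree.of_subsingleton
  bag := fun _ => Set.univ
  bag_cover := fun v => ⟨(), Set.mem_univ v⟩
  bag_edge := fun u v _ => ⟨(), Set.mem_univ u, Set.mem_univ v⟩
  bag_conn := fun v =>
    haveI : Nonempty {t : Unit | v ∈ (Set.univ : Set V)} := ⟨⟨(), Set.mem_univ v⟩⟩
    { preconnected := fun a b => by rw [Subsingleton.elim a b] }

lemma exists_decomp {V : Type} [Fintype V] (G : SimpleGraph V) (k : ℕ) (htw : treewidth G ≤ k) :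
    ∃ d : TreeDecomp G, ∀ t, (d.bag t).ncard ≤ k + 1 := by
  have hne : {k : ℕ | ∃ d : TreeDecomp G, d.width = k}.Nonempty := ⟨_, trivialDecomp G, rfl⟩
  obtain ⟨d, hd⟩ := Nat.sInf_mem hne
  refine ⟨d, fun t => ?_⟩
  -- The bags are subsets of a finite set, so the supremum in `width` is a genuine one.
  have hbd : BddAbove (Set.range fun t => (d.bag t).ncard) := by
    refine ⟨Nat.card V, ?_⟩
    rintro _ ⟨t, rfl⟩
    exact Set.ncard_le_card _
  have h1 : (d.bag t).ncard ≤ ⨆ t, (d.bag t).ncard := le_ciSup hbd t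
  have h2 : d.width ≤ k := hd.trans_le htw
  unfold TreeDecomp.width at h2
  omega

end SepAux

theorem statement_8 {V : Type} [Fintype V] (G : SimpleGraph V) (k : ℕ)
    (htw : treewidth G ≤ k) :
    ∃ C : Set V, IsAlphaSeparator G (1/4) C ∧ C.ncard ≤ 4 * (k + 1) := by
  obtain ⟨d, hd⟩ := SepAux.exists_decomp G k htw
  obtain ⟨C, hC, hS⟩ := SepAux.exists_sep d (Fintype.card V) (k + 1) hd 4 Set.univ
    (by rw [Set.ncard_univ, Nat.card_eq_fintype_card])
  refine ⟨C, fun K => ?_, hC⟩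
  have h := hS (Subtype.val '' K.supp) (Set.subset_univ _)
    (Set.disjoint_left.2 (by rintro _ ⟨x, -, rfl⟩; exact x.2)) (SepAux.cohesive_supp K)
  rw [Set.ncard_image_of_injective _ Subtype.val_injective] at h
  have h' : (4 : ℝ) * K.supp.ncard ≤ Fintype.card V := by exact_mod_cast h
  linarith

end
end

section
/- For every real number c with 0 < c < 1 there exists a real number c' > 0 such that the following holds: for every finite simple 4-regular graph G on n vertices with λ(G) < 4c, every integer δ ≥ 1, and every side assignment σ for G, the blow-up G^δ_σ has treewidth at least c'·δ·n. -/
/-!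
The lower bound comes from balanced separators. Every tree decomposition of a finite graph has a
bag `S` such that each component left after deleting `S` has at most half of the vertices
(`exists_centroid_bag`); it suffices to show that in the blow-up such a set has at least
`(1 - c) / 64 · δn` vertices (`exists_large_component`).

Suppose `S` is smaller. Then few grids contain `δ / 4` or more vertices of `S`. In every other grid
more than three quarters of the rows and of the columns avoid `S`, and these cross, so they lie in
one component of the blow-up minus `S` (`reachable_of_lineFree`). For adjacent vertices of `G` with
such grids, one of the `δ` matching edges joins lines avoiding `S`, so the components agree
(`reachable_of_adj`). Label the vertices of `G` by these components. The spectral gap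
`4 - 4c` of `G` forces one label class to contain almost all vertices (`exists_large_label`, from
the quadratic form bound `quadForm_le`), so the corresponding component has more than half of the
vertices of the blow-up.
-/

/-!
STATEMENT 9: For every real number c with 0 < c < 1 there exists a real number c' > 0
such that the following holds: for every finite simple 4-regular graph G on n vertices
with λ(G) < 4c, every integer δ ≥ 1, and every side assignment σ for G, the blow-up
G^δ_σ has treewidth at least c'·δ·n.
-/

noncomputable section

/-- A side assignment for a 4-regular graph `G`: for each vertex `u`, a bijection from
the (4) neighbors of `u` to the set of sides `{1,2,3,4}` (encoded as `Fin 4`). -/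
def SideAssignment {V : Type} (G : SimpleGraph V) : Type :=
  ∀ u : V, {v : V // G.Adj u v} ≃ Fin 4

/-- The boundary segment of side `s` of the `δ × δ` grid (`s : Fin 4` encodes the sides
`1,2,3,4`); it lists the `δ` vertices of side `s` in order: side 1 = ((1,1),…,(1,δ)),
side 2 = ((1,δ),…,(δ,δ)), side 3 = ((δ,δ),…,(δ,1)), side 4 = ((δ,1),…,(1,1))
(here written 0-indexed, so e.g. side `0` is `i ↦ (0, i)`). -/
def boundarySeg (δ : ℕ) (s : Fin 4) (i : Fin δ) : Fin δ × Fin δ :=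
  match s with
  | 0 => (⟨0, i.pos⟩, i)
  | 1 => (i, ⟨δ - 1, Nat.sub_lt i.pos Nat.one_pos⟩)
  | 2 => (⟨δ - 1, Nat.sub_lt i.pos Nat.one_pos⟩, i.rev)
  | 3 => (i.rev, ⟨0, i.pos⟩)

/-- The blow-up `G^δ_σ` of a 4-regular graph `G`: every vertex is replaced by a `δ × δ`
grid, and every edge `uv` of `G` is replaced by the matching joining, for each `i`, the
`i`-th vertex of the boundary segment of side `σ_u(v)` of the grid of `u` to the
`(δ+1−i)`-th vertex of the boundary segment of side `σ_v(u)` of the grid of `v`. -/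
def blowup {V : Type} (G : SimpleGraph V) (σ : SideAssignment G) (δ : ℕ) :
    SimpleGraph (V × (Fin δ × Fin δ)) :=
  SimpleGraph.fromRel (fun p q =>
    (p.1 = q.1 ∧ (gridGraph δ δ).Adj p.2 q.2) ∨
    (∃ h : G.Adj p.1 q.1, ∃ i : Fin δ,
      p.2 = boundarySeg δ (σ p.1 ⟨q.1, h⟩) i ∧
      q.2 = boundarySeg δ (σ q.1 ⟨p.1, h.symm⟩) i.rev))

/-! ### Spectral gap and edge expansion -/

lemma adjMatrix_row_sum {V : Type} [Fintype V] [DecidableEq V]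
    (G : SimpleGraph V) [DecidableRel G.Adj] (hreg : G.IsRegularOfDegree 4) (u : V) :
    ∑ v, G.adjMatrix ℝ u v = 4 := by
  have : (G.degree u : ℝ) = 4 := by exact_mod_cast hreg u
  rw [← this]
  simp [SimpleGraph.adjMatrix_apply, ← SimpleGraph.card_neighborFinset_eq_degree,
    SimpleGraph.neighborFinset_eq_filter]

/-- The Rayleigh bound: on vectors orthogonal to the constants, the adjacency form is at most
`4c` times the squared norm. An eigenbasis vector `b i₀` of largest eigenvalue is the only one
whose eigenvalue may exceed `graphLambda G`. All others have eigenvalue `< 4c < 4`, so they are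
orthogonal to the constant vector (an eigenvector for `4`); hence `b i₀` spans the constants. -/
lemma rayleigh_of_sum_zero {V : Type} [Fintype V] [DecidableEq V]
    (G : SimpleGraph V) [DecidableRel G.Adj] (hreg : G.IsRegularOfDegree 4)
    {c : ℝ} (hc1 : c < 1) (hlam : graphLambda G < 4 * c) (x : V → ℝ) (hx : ∑ u, x u = 0) :
    ∑ u, ∑ v, (G.adjMatrix ℝ) u v * x u * x v ≤ 4 * c * ∑ u, x u ^ 2 := by
  classical
  set A := G.adjMatrix ℝ with hA_def
  set hA := adjMatrix_isHermitian G
  set b := hA.eigenvectorBasis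
  set μ := hA.eigenvalues
  rcases isEmpty_or_nonempty V with hV | hV
  · simp
  obtain ⟨i₀, hi₀⟩ := Finite.exists_max μ
  have hfin : {x : ℝ | ∃ i j : V, i ≠ j ∧ x = min (μ i) (μ j)}.Finite := by
    refine (Set.finite_range (fun p : V × V => min (μ p.1) (μ p.2))).subset ?_
    rintro _ ⟨i, j, -, rfl⟩
    exact ⟨(i, j), rfl⟩
  have hμ : ∀ i, i ≠ i₀ → μ i < 4 * c := fun i hi =>
    lt_of_le_of_lt (le_csSup hfin.bddAbove ⟨i, i₀, hi, (min_eq_left (hi₀ i)).symm⟩) hlam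
  -- moving `A` across a dot product with an eigenvector
  have hsymm : ∀ (i : V) (y : V → ℝ),
      ∑ u, b i u * (∑ v, A u v * y v) = μ i * ∑ u, b i u * y u := by
    intro i y
    have h1 : ∀ v, ∑ u, A v u * b i u = μ i * b i v := by
      intro v
      have := congrFun (hA.mulVec_eigenvectorBasis i) v
      simpa only [Matrix.mulVec, dotProduct, Pi.smul_apply, smul_eq_mul] using this
    simp_rw [Finset.mul_sum]
    rw [Finset.sum_comm]
    refine Finset.sum_congr rfl fun v _ => ?_
    rw [← mul_assoc, ← h1 v, Finset.sum_mul]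
    refine Finset.sum_congr rfl fun u _ => ?_
    rw [show A u v = A v u from (G.isSymm_adjMatrix (α := ℝ)).apply v u]
    ring
  have hrow : ∀ u, ∑ v, A u v = 4 := adjMatrix_row_sum G hreg
  have hone : ∀ i, i ≠ i₀ → ∑ u, b i u = 0 := by
    intro i hi
    have := hsymm i (fun _ => 1)
    simp only [mul_one, hrow, ← Finset.sum_mul] at this
    have h2 := hμ i hi
    have : (4 - μ i) * ∑ u, b i u = 0 := by linarith
    rcases mul_eq_zero.1 this with h | h
    · linarith
    · exact h
  have hinner : ∀ (i : V) (y : V → ℝ),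
      inner ℝ (b i) (WithLp.toLp 2 y : EuclideanSpace ℝ V) = ∑ u, b i u * y u := by
    intro i y
    simp [PiLp.inner_apply, mul_comm]
  -- Parseval's identity
  have hpars : ∀ y z : V → ℝ,
      ∑ i, (∑ u, b i u * y u) * (∑ u, b i u * z u) = ∑ u, y u * z u := by
    intro y z
    have := b.sum_inner_mul_inner (WithLp.toLp 2 y) (WithLp.toLp 2 z)
    simp_rw [real_inner_comm (b _) (WithLp.toLp 2 y), hinner] at this
    rw [this]
    simp [PiLp.inner_apply, mul_comm]
  -- the constant vector is a nonzero multiple of `b i₀`, so `x` is orthogonal to `b i₀`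
  have hx₀ : ∑ u, b i₀ u * x u = 0 := by
    have h1 := hpars (fun _ => 1) x
    rw [Finset.sum_eq_single i₀ (fun i _ hi => by simp [hone i hi]) (by simp)] at h1
    have h2 := hpars (fun _ => 1) (fun _ => 1)
    rw [Finset.sum_eq_single i₀ (fun i _ hi => by simp [hone i hi]) (by simp)] at h2
    simp only [mul_one, one_mul, hx, Finset.sum_const, Finset.card_univ, nsmul_eq_mul] at h1 h2
    rcases mul_eq_zero.1 h1 with h | h
    · have : (0 : ℝ) < Fintype.card V := by exact_mod_cast Fintype.card_pos
      rw [h] at h2; linarith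
    · exact h
  calc ∑ u, ∑ v, A u v * x u * x v = ∑ u, x u * ∑ v, A u v * x v := by
        simp_rw [Finset.mul_sum]
        exact Finset.sum_congr rfl fun u _ => Finset.sum_congr rfl fun v _ => by ring
    _ = ∑ i, μ i * (∑ u, b i u * x u) ^ 2 := by
        rw [← hpars]
        refine Finset.sum_congr rfl fun i _ => ?_
        rw [hsymm]; ring
    _ ≤ ∑ i, 4 * c * (∑ u, b i u * x u) ^ 2 := by
        refine Finset.sum_le_sum fun i _ => ?_
        by_cases hi : i = i₀
        · subst hi; simp [hx₀]
        · exact mul_le_mul_of_nonneg_right (hμ i hi).le (sq_nonneg _)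
    _ = 4 * c * ∑ u, x u ^ 2 := by
        rw [← Finset.mul_sum]
        congr 1
        have := hpars x x
        simpa only [sq] using this

/-- The adjacency form on an arbitrary vector, obtained by splitting off its mean and applying
`rayleigh_of_sum_zero` to the rest. For an indicator vector this is the expander edge bound. -/
lemma quadForm_le_s9 {V : Type} [Fintype V] [DecidableEq V] [Nonempty V]
    (G : SimpleGraph V) [DecidableRel G.Adj] (hreg : G.IsRegularOfDegree 4)
    {c : ℝ} (hc1 : c < 1) (hlam : graphLambda G < 4 * c) (y : V → ℝ) :
    ∑ u, ∑ v, (G.adjMatrix ℝ) u v * y u * y v ≤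
      4 * c * ∑ u, y u ^ 2 + 4 * (1 - c) * (∑ u, y u) ^ 2 / Fintype.card V := by
  have hn : (0 : ℝ) < Fintype.card V := by exact_mod_cast Fintype.card_pos
  set n : ℝ := (Fintype.card V : ℝ)
  set s := ∑ u, y u with hs
  set A := G.adjMatrix ℝ with hA_def
  have hrow : ∀ u, ∑ v, A u v = 4 := adjMatrix_row_sum G hreg
  have hcol : ∀ u, ∑ v, A v u = 4 := by
    intro u
    rw [← hrow u]
    exact Finset.sum_congr rfl fun v _ => (G.isSymm_adjMatrix (α := ℝ)).apply u v
  have key := rayleigh_of_sum_zero G hreg hc1 hlam (fun u => y u - s / n) (by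
    rw [Finset.sum_sub_distrib, ← hs, Finset.sum_const, Finset.card_univ, nsmul_eq_mul]
    field_simp; simp [n])
  have e1 : ∑ u, (y u - s / n) ^ 2 = ∑ u, y u ^ 2 - s ^ 2 / n := by
    have : ∀ u, (y u - s / n) ^ 2 = y u ^ 2 - 2 * (s / n) * y u + (s / n) ^ 2 := fun u => by ring
    simp_rw [this]
    rw [Finset.sum_add_distrib, Finset.sum_sub_distrib, ← Finset.mul_sum, ← hs,
      Finset.sum_const, Finset.card_univ, nsmul_eq_mul]
    change _ - _ + n * _ = _
    field_simp; ring
  have e2 : ∑ u, ∑ v, A u v * (y u - s / n) * (y v - s / n) =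
      ∑ u, ∑ v, A u v * y u * y v - 4 * s ^ 2 / n := by
    have : ∀ u v, A u v * (y u - s / n) * (y v - s / n) =
        A u v * y u * y v - (s / n) * (y u * A u v) - (s / n) * (A u v * y v) +
          (s / n) ^ 2 * A u v := fun u v => by ring
    simp_rw [this, Finset.sum_add_distrib, Finset.sum_sub_distrib, ← Finset.mul_sum, hrow]
    rw [Finset.sum_comm (f := fun u v => A u v * y v)]
    simp_rw [← Finset.sum_mul, hcol, ← Finset.mul_sum, ← hs, Finset.sum_const, Finset.card_univ,
      nsmul_eq_mul]
    change _ - _ - _ + _ * (n * 4) = _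
    field_simp; ring
  rw [← hA_def] at key
  rw [e1, e2] at key
  have : 4 * (1 - c) * s ^ 2 / n = 4 * s ^ 2 / n - 4 * c * (s ^ 2 / n) := by ring
  linarith

/-- If a labelling of the vertices is constant along every edge avoiding the set `X`, then one
label class contains all but `2|X| / (1 - c)` vertices. Apply `quadForm_le` to the indicator of
each label class and sum: at most `8|X|` ordered adjacent pairs have distinct labels, whereas
`∑ |class|² ≤ n · max |class|`. -/
lemma exists_large_label {V L : Type} [Fintype V] [DecidableEq V] [Nonempty V]
    [Fintype L] [DecidableEq L]
    (G : SimpleGraph V) [DecidableRel G.Adj] (hreg : G.IsRegularOfDegree 4)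
    {c : ℝ} (hc1 : c < 1) (hlam : graphLambda G < 4 * c) (X : Finset V) (f : V → L)
    (hf : ∀ u v, G.Adj u v → u ∉ X → v ∉ X → f u = f v) :
    ∃ l, (Fintype.card V : ℝ) - 2 * X.card / (1 - c) ≤ (Finset.univ.filter (f · = l)).card := by
  have hn : (0 : ℝ) < Fintype.card V := by exact_mod_cast Fintype.card_pos
  set n : ℝ := (Fintype.card V : ℝ) with hn_def
  set A := G.adjMatrix ℝ with hA_def
  have hrow : ∀ u, ∑ v, A u v = 4 := adjMatrix_row_sum G hreg
  have hcol : ∀ u, ∑ v, A v u = 4 := by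
    intro u
    rw [← hrow u]
    exact Finset.sum_congr rfl fun v _ => (G.isSymm_adjMatrix (α := ℝ)).apply u v
  let y : L → V → ℝ := fun l u => if f u = l then 1 else 0
  have : Nonempty L := ⟨f (Classical.arbitrary V)⟩
  obtain ⟨l₀, hl₀⟩ := Finite.exists_max fun l => ∑ u, y l u
  have hy0 : ∀ l, 0 ≤ ∑ u, y l u := fun l =>
    Finset.sum_nonneg fun u _ => by simp only [y]; split_ifs <;> norm_num
  have hyn : ∑ l, ∑ u, y l u = n := by
    rw [Finset.sum_comm]; simp [y, hn_def]
  refine ⟨l₀, ?_⟩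
  have hcard : ((Finset.univ.filter (f · = l₀)).card : ℝ) = ∑ u, y l₀ u := by simp [y]
  rw [hcard]
  have h1 : ∑ l, ∑ u, ∑ v, A u v * y l u * y l v ≤
      ∑ l, (4 * c * ∑ u, y l u + 4 * (1 - c) / n * ((∑ u, y l₀ u) * ∑ u, y l u)) := by
    refine Finset.sum_le_sum fun l _ => (quadForm_le_s9 G hreg hc1 hlam (y l)).trans ?_
    have e : ∑ u, y l u ^ 2 = ∑ u, y l u :=
      Finset.sum_congr rfl fun u _ => by simp only [y]; split_ifs <;> norm_num
    have hc : 0 ≤ 4 * (1 - c) / n := div_nonneg (by linarith) hn.le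
    have := mul_le_mul_of_nonneg_left (mul_le_mul_of_nonneg_right (hl₀ l) (hy0 l)) hc
    rw [e, mul_div_right_comm, sq]
    linarith
  rw [Finset.sum_add_distrib, ← Finset.mul_sum, ← Finset.mul_sum, ← Finset.mul_sum, hyn] at h1
  have h2 : ∑ l, ∑ u, ∑ v, A u v * y l u * y l v =
      ∑ u, ∑ v, A u v * (if f u = f v then 1 else 0) := by
    rw [Finset.sum_comm]
    refine Finset.sum_congr rfl fun u _ => ?_
    rw [Finset.sum_comm]
    refine Finset.sum_congr rfl fun v _ => ?_
    simp_rw [mul_assoc, ← Finset.mul_sum]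
    congr 1
    simp [y, eq_comm]
  -- an edge with distinct labels has an endpoint in `X`
  have h3 : ∑ u, ∑ v, (A u v - (if u ∈ X then A u v else 0) - (if v ∈ X then A u v else 0)) ≤
      ∑ u, ∑ v, A u v * (if f u = f v then 1 else 0) := by
    refine Finset.sum_le_sum fun u _ => Finset.sum_le_sum fun v _ => ?_
    by_cases huv : G.Adj u v
    · have hA1 : A u v = 1 := by simp [hA_def, huv]
      by_cases hu : u ∈ X <;> by_cases hv : v ∈ X <;> simp only [hu, hv, hA1, if_true, if_false]
      · split_ifs <;> norm_num
      · split_ifs <;> norm_num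
      · split_ifs <;> norm_num
      · simp [hf u v huv hu hv]
    · have hA1 : A u v = 0 := by simp [hA_def, huv]
      simp [hA1]
  have h4 : ∑ u, ∑ v, (A u v - (if u ∈ X then A u v else 0) - (if v ∈ X then A u v else 0)) =
      4 * n - 8 * X.card := by
    simp_rw [Finset.sum_sub_distrib]
    rw [Finset.sum_comm (f := fun u v => if v ∈ X then A u v else 0)]
    have e : ∀ u, (∑ v, if u ∈ X then A u v else 0) = if u ∈ X then 4 else 0 := by
      intro u; split_ifs
      · exact hrow u
      · simp
    have e' : ∀ u, (∑ v, if u ∈ X then A v u else 0) = if u ∈ X then 4 else 0 := by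
      intro u; split_ifs
      · exact hcol u
      · simp
    simp_rw [e, e', hrow]
    simp [← hn_def]
    ring
  have hc : 0 < 1 - c := sub_pos.2 hc1
  have h5 : 4 * n - 8 * X.card ≤ 4 * c * n + 4 * (1 - c) * ∑ u, y l₀ u := by
    rw [← h4]
    refine h3.trans (h2 ▸ h1.trans (le_of_eq ?_))
    field_simp
  have h6 : 2 * (X.card : ℝ) / (1 - c) * (1 - c) = 2 * X.card := by field_simp
  by_contra! hlt
  have := mul_lt_mul_of_pos_right hlt hc
  nlinarith
/-! ### Centroid bags of tree decompositions -/

/-- The graph `H` with every edge meeting `S` removed. The vertices of `S` are kept as isolated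
points, so that the components of `H - S` can be handled without passing to a subtype. -/
def isolate {W : Type} (H : SimpleGraph W) (S : Set W) : SimpleGraph W where
  Adj p q := H.Adj p q ∧ p ∉ S ∧ q ∉ S
  symm := ⟨fun _ _ h => ⟨h.1.symm, h.2.2, h.2.1⟩⟩
  loopless := ⟨fun _ h => h.1.ne rfl⟩

/-- In a tree, if `s` is reached from the neighbour `t'` of `t` without passing through `t`, then
the geodesic from `t` to `s` starts with the edge `tt'`: a different first vertex `x` would be
joined to `t'` both through `t` and by a path avoiding `t`. -/
lemma dist_succ_le_of_avoid {ι : Type} {T : SimpleGraph ι} (hT : T.IsTree) {t t' s : ι}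
    (h : T.Adj t t') (p : T.Walk t' s) (hp : t ∉ p.support) :
    T.dist t' s + 1 ≤ T.dist t s := by
  classical
  obtain ⟨q, hq, hql⟩ := (hT.connected t s).exists_path_of_dist
  cases q with
  | nil => simp at hp
  | @cons _ x _ hx q =>
    rw [SimpleGraph.Walk.cons_isPath_iff] at hq
    have hxt : x = t' := by
      by_contra hne
      -- two paths from `x` to `t'`: one through `t`, one avoiding it
      let r := (q.append p.reverse).bypass
      have hr : t ∉ r.support := fun hmem => by
        have := SimpleGraph.Walk.support_bypass_subset_support _ hmem
        simp [SimpleGraph.Walk.mem_support_append_iff, hp, hq.2] at this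
      have hpath : (SimpleGraph.Walk.cons hx.symm (.cons h .nil)).IsPath := by
        simp [SimpleGraph.Walk.cons_isPath_iff, h.ne, hx.ne.symm, hne]
      have := congrArg Subtype.val <| (hT.isAcyclic.subsingleton_path x t').elim
        ⟨_, hpath⟩ ⟨r, SimpleGraph.Walk.bypass_isPath _⟩
      apply hr
      simp only at this
      rw [← this]
      simp
    subst hxt
    rw [← hql, SimpleGraph.Walk.length_cons]
    exact Nat.add_le_add_right (SimpleGraph.dist_le q) 1

/-- Every tree decomposition has a bag whose removal leaves only components with at most half of
the vertices. Choose for each vertex `v` a node `node v` whose bag contains `v`, and let `t`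
minimise `∑ v, dist t (node v)`. The nodes of a component avoiding the bag of `t` all lie in the
branch at a single neighbour `t'` of `t`; moving to `t'` lowers the distance by one for each
vertex of the component and raises it by at most one for the others. The tree may be infinite:
the minimum exists because the potential is a natural number. -/
lemma exists_centroid_bag_s9 {W : Type} [Fintype W] {H : SimpleGraph W} (d : TreeDecomp H) :
    ∃ t, ∀ p, p ∉ d.bag t →
      2 * {q | (isolate H (d.bag t)).Reachable p q}.ncard ≤ Fintype.card W := by
  classical
  choose node hnode using d.bag_cover
  have : Nonempty d.ι := d.isTree.connected.nonempty
  let Φ : d.ι → ℕ := fun t => ∑ v, d.tree.dist t (node v)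
  obtain ⟨t, ht⟩ : ∃ t, ∀ t', Φ t ≤ Φ t' :=
    ⟨Function.argmin Φ, fun t' => Function.argmin_le Φ t'⟩
  refine ⟨t, fun p hp => ?_⟩
  set Z := {q | (isolate H (d.bag t)).Reachable p q} with hZ
  -- the bags of a vertex outside `d.bag t` are joined by walks avoiding `t`
  have hbag : ∀ q, q ∉ d.bag t → ∀ s s', q ∈ d.bag s → q ∈ d.bag s' →
      ∃ w : d.tree.Walk s s', t ∉ w.support := by
    intro q hq s s' hs hs'
    obtain ⟨w⟩ := (d.bag_conn q).preconnected ⟨s, hs⟩ ⟨s', hs'⟩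
    refine ⟨w.map (SimpleGraph.Embedding.induce {t | q ∈ d.bag t}).toHom, ?_⟩
    intro hmem
    obtain ⟨x, -, rfl⟩ := List.mem_map.1 ((SimpleGraph.Walk.support_map _ w) ▸ hmem)
    exact hq x.2
  have hne : t ≠ node p := fun h => hp (h ▸ hnode p)
  obtain ⟨w, hw⟩ := (d.isTree.connected t (node p)).exists_isPath
  cases w with
  | nil => exact absurd rfl hne
  | @cons _ t' _ htt' w =>
    rw [SimpleGraph.Walk.cons_isPath_iff] at hw
    have hreach : ∀ q, (isolate H (d.bag t)).Reachable p q →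
        q ∉ d.bag t ∧ ∃ w : d.tree.Walk t' (node q), t ∉ w.support := by
      intro q hq
      rw [SimpleGraph.reachable_iff_reflTransGen] at hq
      induction hq with
      | refl => exact ⟨hp, w, hw.2⟩
      | @tail a b _ hab ih =>
        obtain ⟨ha, w₁, hw₁⟩ := ih
        obtain ⟨s, has, hbs⟩ := d.bag_edge hab.1
        obtain ⟨w₂, hw₂⟩ := hbag a ha _ s (hnode a) has
        obtain ⟨w₃, hw₃⟩ := hbag b hab.2.2 s _ hbs (hnode b)
        refine ⟨hab.2.2, w₁.append (w₂.append w₃), ?_⟩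
        simp [SimpleGraph.Walk.mem_support_append_iff, hw₁, hw₂, hw₃]
    -- the change of each distance when `t` is replaced by `t'`
    have hmove : ∀ q, d.tree.dist t' (node q) + 2 * (if q ∈ Z then 1 else 0) ≤
        d.tree.dist t (node q) + 1 := by
      intro q
      split_ifs with hq
      · obtain ⟨-, w, hw⟩ := hreach q hq
        have := dist_succ_le_of_avoid d.isTree htt' w hw
        omega
      · have h1 := d.isTree.connected.dist_triangle (u := t') (v := t) (w := node q)
        have h2 : d.tree.dist t' t = 1 := SimpleGraph.dist_eq_one_iff_adj.2 htt'.symm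
        omega
    have hsum := Finset.sum_le_sum fun q (_ : q ∈ Finset.univ) => hmove q
    rw [Finset.sum_add_distrib, Finset.sum_add_distrib, ← Finset.mul_sum] at hsum
    have hmin := ht t'
    have hZc : Z.ncard = ∑ q : W, if q ∈ Z then 1 else 0 := by
      rw [Set.ncard_eq_toFinset_card', ← Finset.card_filter]
      exact congrArg Finset.card (by ext; simp)
    simp only [Finset.sum_const, Finset.card_univ, smul_eq_mul, mul_one] at hsum
    rw [hZc]
    simp only [Φ] at hmin
    omega

/-- The infimum defining the treewidth is attained: the set of widths is nonempty because of the
decomposition with a single bag. -/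
lemma exists_width_eq_treewidth {W : Type} (H : SimpleGraph W) :
    ∃ d : TreeDecomp H, d.width = treewidth H := by
  have : {k : ℕ | ∃ d : TreeDecomp H, d.width = k}.Nonempty := by
    refine ⟨_, ⟨Unit, ⊥, ?_, fun _ => Set.univ, fun _ => ⟨(), trivial⟩,
      fun _ _ _ => ⟨(), trivial, trivial⟩, fun _ => ?_⟩, rfl⟩
    · exact SimpleGraph.IsTree.of_subsingleton
    · exact { preconnected := .of_subsingleton, nonempty := ⟨⟨(), trivial⟩⟩ }
  exact Nat.sInf_mem this

/-- Finiteness of `W` bounds the bag sizes, so the supremum in `TreeDecomp.width` is not a junk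
value. -/
lemma bag_ncard_le_width_succ {W : Type} [Finite W] {H : SimpleGraph W} (d : TreeDecomp H)
    (t : d.ι) : (d.bag t).ncard ≤ d.width + 1 := by
  have hb : BddAbove (Set.range fun t => (d.bag t).ncard) := by
    refine ⟨Nat.card W, ?_⟩
    rintro _ ⟨t, rfl⟩
    exact Set.ncard_le_card _
  have := le_ciSup hb t
  unfold TreeDecomp.width
  omega
/-! ### Grid lines avoiding a separator -/

/-- The index of the grid line through `p` perpendicular to side `s`, numbered so that line `i`
ends at the `i`-th vertex of the boundary segment of side `s`. For `s = 1, 3` the lines are the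
rows, for `s = 0, 2` the columns. -/
def lineIndex (δ : ℕ) (s : Fin 4) (p : Fin δ × Fin δ) : Fin δ :=
  match s with
  | 0 => p.2
  | 1 => p.1
  | 2 => p.2.rev
  | 3 => p.1.rev

lemma lineIndex_boundarySeg (δ : ℕ) (s : Fin 4) (i : Fin δ) :
    lineIndex δ s (boundarySeg δ s i) = i := by
  fin_cases s <;> simp [lineIndex, boundarySeg]

/-- In the grid of `u`, the `i`-th line perpendicular to side `s` contains no vertex of `S`. -/
def LineFree {V : Type} {δ : ℕ} (S : Set (V × (Fin δ × Fin δ))) (u : V) (s : Fin 4)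
    (i : Fin δ) : Prop :=
  ∀ p, lineIndex δ s p = i → (u, p) ∉ S

/-- The lines perpendicular to a side are disjoint, so those that meet `S` are at most as many as
the vertices of `S` in the grid of `u`. The reindexing `e` covers the reversal in the matching
edges. -/
lemma card_not_lineFree_le {V : Type} [Finite V] {δ : ℕ} (S : Set (V × (Fin δ × Fin δ)))
    (u : V) (s : Fin 4) (e : Fin δ → Fin δ) (he : Function.Injective e) :
    {i | ¬ LineFree S u s (e i)}.ncard ≤ {p | (u, p) ∈ S}.ncard := by
  rw [← Set.ncard_image_of_injective _ he]
  refine (Set.ncard_le_ncard (t := lineIndex δ s '' {p | (u, p) ∈ S}) ?_).trans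
    (Set.ncard_image_le)
  rintro _ ⟨i, hi, rfl⟩
  simp only [LineFree, Set.mem_ofPred_eq, not_forall, not_not] at hi
  obtain ⟨p, hp, hpS⟩ := hi
  exact ⟨p, hpS, hp⟩

lemma reachable_of_consecutive_s9 {W : Type} {H : SimpleGraph W} {δ : ℕ} (f : Fin δ → W)
    (hf : ∀ j k : Fin δ, k.val = j.val + 1 → H.Adj (f j) (f k)) (j k : Fin δ) :
    H.Reachable (f j) (f k) := by
  have h0 : ∀ (m : ℕ) (hm : m < δ), H.Reachable (f ⟨0, by omega⟩) (f ⟨m, hm⟩) := by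
    intro m
    induction m with
    | zero => intro _; exact .refl _
    | succ m ih => intro hm; exact (ih (by omega)).trans (hf _ _ rfl).reachable
  exact (h0 j j.2).symm.trans (h0 k k.2)

lemma sum_ncard_fiber {V P : Type} [Fintype V] [Fintype P] (S : Set (V × P)) :
    ∑ u, {p | (u, p) ∈ S}.ncard = S.ncard := by
  classical
  rw [Set.ncard_eq_toFinset_card', Finset.card_eq_sum_card_fiberwise
    (f := Prod.fst) (t := Finset.univ) (by simp)]
  refine Finset.sum_congr rfl fun u _ => ?_
  rw [← Set.ncard_image_of_injective _ (Prod.mk_right_injective u), ← Set.ncard_coe_finset]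
  congr 1
  ext ⟨a, p⟩
  simp only [Set.mem_image, Set.mem_ofPred_eq, Prod.mk.injEq, Finset.coe_filter, Set.mem_toFinset]
  constructor
  · rintro ⟨p, hp, rfl, rfl⟩; exact ⟨hp, rfl⟩
  · rintro ⟨hp, rfl⟩; exact ⟨p, hp, rfl, rfl⟩

/-! ### The large component left by a small separator -/

section Blowup

variable {V : Type} {G : SimpleGraph V} {σ : SideAssignment G} {δ : ℕ}
  {S : Set (V × (Fin δ × Fin δ))}

lemma blowup_adj_of_grid (u : V) {p q : Fin δ × Fin δ} (h : (gridGraph δ δ).Adj p q) :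
    (blowup G σ δ).Adj (u, p) (u, q) := by
  rw [blowup, SimpleGraph.fromRel_adj]
  exact ⟨fun e => h.ne (congrArg Prod.snd e), .inl (.inl ⟨rfl, h⟩)⟩

lemma blowup_adj_of_matching {u v : V} (h : G.Adj u v) (i : Fin δ) :
    (blowup G σ δ).Adj (u, boundarySeg δ (σ u ⟨v, h⟩) i)
      (v, boundarySeg δ (σ v ⟨u, h.symm⟩) i.rev) := by
  rw [blowup, SimpleGraph.fromRel_adj]
  exact ⟨fun e => h.ne (congrArg Prod.fst e), .inl (.inr ⟨h, i, rfl, rfl⟩)⟩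

lemma reachable_row {u : V} {x : Fin δ} (h : LineFree S u 1 x) (y y' : Fin δ) :
    (isolate (blowup G σ δ) S).Reachable (u, (x, y)) (u, (x, y')) := by
  refine reachable_of_consecutive_s9 (fun y => (u, (x, y))) (fun j k hjk => ?_) y y'
  refine ⟨blowup_adj_of_grid u ?_, h _ rfl, h _ rfl⟩
  rw [gridGraph, SimpleGraph.fromRel_adj]
  refine ⟨fun e => ?_, .inl (.inl ⟨rfl, .inl hjk⟩)⟩
  have := congrArg (fun p : Fin δ × Fin δ => p.2.val) e
  simp only at this
  omega

lemma reachable_col {u : V} {y : Fin δ} (h : LineFree S u 0 y) (x x' : Fin δ) :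
    (isolate (blowup G σ δ) S).Reachable (u, (x, y)) (u, (x', y)) := by
  refine reachable_of_consecutive_s9 (fun x => (u, (x, y))) (fun j k hjk => ?_) x x'
  refine ⟨blowup_adj_of_grid u ?_, h _ rfl, h _ rfl⟩
  rw [gridGraph, SimpleGraph.fromRel_adj]
  refine ⟨fun e => ?_, .inl (.inr ⟨rfl, .inl hjk⟩)⟩
  have := congrArg (fun p : Fin δ × Fin δ => p.1.val) e
  simp only at this
  omega

/-- All `S`-free lines of the grid of `u` lie in one component, since every row crosses every
column: each of their points is joined to the crossing `(i₀, j₀)` of a free row and a free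
column. -/
lemma reachable_of_lineFree {u : V} {i₀ j₀ : Fin δ} (hi₀ : LineFree S u 1 i₀)
    (hj₀ : LineFree S u 0 j₀) (s : Fin 4) (p : Fin δ × Fin δ)
    (h : LineFree S u s (lineIndex δ s p)) :
    (isolate (blowup G σ δ) S).Reachable (u, p) (u, (i₀, j₀)) := by
  obtain ⟨x, y⟩ := p
  have hr : LineFree S u 1 x → (isolate (blowup G σ δ) S).Reachable (u, (x, y)) (u, (i₀, j₀)) :=
    fun h => (reachable_row h y j₀).trans (reachable_col hj₀ x i₀)
  have hc : LineFree S u 0 y → (isolate (blowup G σ δ) S).Reachable (u, (x, y)) (u, (i₀, j₀)) :=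
    fun h => (reachable_col h x i₀).trans (reachable_row hi₀ y j₀)
  match s, h with
  | 0, h => exact hc h
  | 1, h => exact hr h
  | 2, h => exact hc fun p hp => h p (congrArg Fin.rev hp)
  | 3, h => exact hr fun p hp => h p (congrArg Fin.rev hp)

/-- If the grids of two adjacent vertices `u`, `v` each contain fewer than `δ / 4` vertices of
`S`, then the components of their free lines coincide: among the `δ` matching edges of `uv`, fewer
than `δ / 2` have an endpoint on a line, perpendicular to the side used, that meets `S`. -/
lemma reachable_of_adj [Finite V] {u v : V} (huv : G.Adj u v)
    (hu : 4 * {p | (u, p) ∈ S}.ncard < δ) (hv : 4 * {p | (v, p) ∈ S}.ncard < δ)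
    {i j i' j' : Fin δ} (hi : LineFree S u 1 i) (hj : LineFree S u 0 j)
    (hi' : LineFree S v 1 i') (hj' : LineFree S v 0 j') :
    (isolate (blowup G σ δ) S).Reachable (u, (i, j)) (v, (i', j')) := by
  set s := σ u ⟨v, huv⟩ with hs
  set s' := σ v ⟨u, huv.symm⟩ with hs'
  have h1 := card_not_lineFree_le S u s id Function.injective_id
  have h2 := card_not_lineFree_le S v s' Fin.rev Fin.rev_injective
  obtain ⟨k, hk⟩ : ∃ k, k ∉ {i | ¬ LineFree S u s (id i)} ∪ {i | ¬ LineFree S v s' (Fin.rev i)} := by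
    by_contra! hall
    have h3 := Set.ncard_union_le {i | ¬ LineFree S u s (id i)}
      {i | ¬ LineFree S v s' (Fin.rev i)}
    rw [Set.eq_univ_of_forall hall, Set.ncard_univ, Nat.card_fin] at h3
    omega
  simp only [Set.mem_union, Set.mem_ofPred_eq, not_or, not_not, id] at hk
  have hadj : (isolate (blowup G σ δ) S).Adj (u, boundarySeg δ s k) (v, boundarySeg δ s' k.rev) :=
    ⟨blowup_adj_of_matching huv k, hk.1 _ (lineIndex_boundarySeg ..),
      hk.2 _ (lineIndex_boundarySeg ..)⟩
  refine ((reachable_of_lineFree hi hj s _ ?_).symm.trans hadj.reachable).trans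
    (reachable_of_lineFree hi' hj' s' _ ?_)
  · rw [lineIndex_boundarySeg]; exact hk.1
  · rw [lineIndex_boundarySeg]; exact hk.2

lemma exists_lineFree [Finite V] {u : V} (hu : 4 * {p | (u, p) ∈ S}.ncard < δ) (s : Fin 4) :
    ∃ i, LineFree S u s i := by
  by_contra! hall
  have h1 := card_not_lineFree_le S u s id Function.injective_id
  rw [Set.eq_univ_of_forall (s := {i | ¬ LineFree S u s (id i)}) hall, Set.ncard_univ,
    Nat.card_fin] at h1
  omega

/-- A set `S` with fewer than `(1 - c) / 64 · δn` vertices leaves a component with more than half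
of all vertices of the blow-up. Fewer than `(1 - c) / 16 · n` grids (those of `X`) contain at least
`δ / 4` vertices of `S`. Labelling each `u` by the component of a crossing of free lines in its
grid, `exists_large_label` gives a component that is the label of at least `7n / 8` vertices, hence
of more than `13n / 16` vertices outside `X`; in each of those grids it contains all free rows, that
is at least `3δ² / 4` points. -/
lemma exists_large_component [Fintype V] [DecidableEq V] [Nonempty V] [DecidableRel G.Adj]
    (hreg : G.IsRegularOfDegree 4) {c : ℝ} (hc0 : 0 < c) (hc1 : c < 1)
    (hlam : graphLambda G < 4 * c)
    (hS : (S.ncard : ℝ) < (1 - c) / 64 * δ * Fintype.card V) :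
    ∃ p, p ∉ S ∧ Fintype.card (V × (Fin δ × Fin δ)) <
      2 * {q | (isolate (blowup G σ δ) S).Reachable p q}.ncard := by
  classical
  have hn : (0 : ℝ) < Fintype.card V := by exact_mod_cast Fintype.card_pos
  have hδ : 0 < δ := by
    rcases Nat.eq_zero_or_pos δ with rfl | h
    · simp at hS
      have : (0 : ℝ) ≤ S.ncard := Nat.cast_nonneg _
      linarith
    · exact h
  have hδ' : (0 : ℝ) < δ := by exact_mod_cast hδ
  set H := isolate (blowup G σ δ) S with hH
  let m : V → ℕ := fun u => {p | (u, p) ∈ S}.ncard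
  have hm : ∑ u, m u = S.ncard := sum_ncard_fiber S
  let X : Finset V := Finset.univ.filter fun u => δ ≤ 4 * m u
  have hX : δ * X.card ≤ 4 * S.ncard := by
    rw [← hm, Finset.mul_sum, mul_comm, ← smul_eq_mul]
    refine (Finset.card_nsmul_le_sum X (fun u => 4 * m u) δ
      fun u hu => (Finset.mem_filter.1 hu).2).trans ?_
    exact Finset.sum_le_sum_of_subset (Finset.subset_univ _)
  have hXn : (X.card : ℝ) < (1 - c) / 16 * Fintype.card V := by
    have : (δ : ℝ) * X.card ≤ 4 * S.ncard := by exact_mod_cast hX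
    have h2 : (δ : ℝ) * X.card < δ * ((1 - c) / 16 * Fintype.card V) := by linarith
    exact lt_of_mul_lt_mul_left h2 hδ'.le
  have hgood : ∀ u, u ∉ X → 4 * m u < δ := fun u hu => by
    simpa [X] using hu
  -- outside `X`, `z u` is the crossing of a free row and a free column
  have hcentre : ∀ u, ∃ p : Fin δ × Fin δ, u ∉ X → LineFree S u 1 p.1 ∧ LineFree S u 0 p.2 := by
    intro u
    by_cases hu : u ∈ X
    · exact ⟨(⟨0, hδ⟩, ⟨0, hδ⟩), fun h => absurd hu h⟩
    · obtain ⟨i, hi⟩ := exists_lineFree (hgood u hu) 1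
      obtain ⟨j, hj⟩ := exists_lineFree (hgood u hu) 0
      exact ⟨(i, j), fun _ => ⟨hi, hj⟩⟩
  choose z hz using hcentre
  obtain ⟨l, hl⟩ := exists_large_label G hreg hc1 hlam X
    (fun u => H.connectedComponentMk (u, z u))
    (fun u v huv hu hv => SimpleGraph.ConnectedComponent.sound <|
      reachable_of_adj huv (hgood u hu) (hgood v hv) (hz u hu).1 (hz u hu).2
        (hz v hv).1 (hz v hv).2)
  set U : Finset V := Finset.univ.filter fun u => H.connectedComponentMk (u, z u) = l with hU
  have hc : 0 < 1 - c := sub_pos.2 hc1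
  have hU' : (13 / 16 : ℝ) * Fintype.card V < (U \ X).card := by
    have h1 : 2 * (X.card : ℝ) / (1 - c) < Fintype.card V / 8 := by
      rw [div_lt_iff₀ hc]; linarith
    have h2 : (U.card : ℝ) ≤ (U \ X).card + X.card := by
      exact_mod_cast Finset.card_le_card_sdiff_add_card
    have h3 : (1 - c) / 16 * Fintype.card V ≤ 1 / 16 * Fintype.card V :=
      mul_le_mul_of_nonneg_right (by linarith) hn.le
    linarith
  obtain ⟨u₀, hu₀⟩ : (U \ X).Nonempty := by
    rw [← Finset.card_pos]
    have : (0 : ℝ) < (U \ X).card := lt_trans (by positivity) hU'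
    exact_mod_cast this
  rw [Finset.mem_sdiff] at hu₀
  refine ⟨(u₀, z u₀), (hz u₀ hu₀.2).1 _ rfl, ?_⟩
  set Z := {q | H.Reachable (u₀, z u₀) q} with hZ
  have hfib : ∀ u ∈ U \ X, 3 * (δ * δ) ≤ 4 * {p | (u, p) ∈ Z}.ncard := by
    intro u hu
    rw [Finset.mem_sdiff] at hu
    have hsub : {i | LineFree S u 1 i} ×ˢ Set.univ ⊆ {p | (u, p) ∈ Z} := by
      rintro ⟨i, j⟩ ⟨hi, -⟩
      have h1 : H.Reachable (u₀, z u₀) (u, z u) := SimpleGraph.ConnectedComponent.exact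
        ((Finset.mem_filter.1 hu₀.1).2.trans (Finset.mem_filter.1 hu.1).2.symm)
      exact h1.trans
        (reachable_of_lineFree (hz u hu.2).1 (hz u hu.2).2 1 (i, j) hi).symm
    have h1 := Set.ncard_le_ncard hsub
    rw [Set.ncard_prod, Set.ncard_univ, Nat.card_fin] at h1
    have h2 := card_not_lineFree_le S u 1 id Function.injective_id
    have h3 := Set.ncard_add_ncard_compl {i | LineFree S u 1 i}
    rw [Nat.card_fin, Set.compl_ofPred] at h3
    simp only [id] at h2
    have h4 : 4 * {p | (u, p) ∈ S}.ncard < δ := hgood u hu.2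
    have h5 : 3 * δ ≤ 4 * {i | LineFree S u 1 i}.ncard := by omega
    nlinarith
  have hZcard : (U \ X).card * (3 * (δ * δ)) ≤ 4 * Z.ncard := by
    rw [← sum_ncard_fiber Z, Finset.mul_sum, ← smul_eq_mul]
    exact (Finset.card_nsmul_le_sum _ _ _ hfib).trans
      (Finset.sum_le_sum_of_subset (Finset.subset_univ _))
  have hZcard' : ((U \ X).card : ℝ) * (3 * (δ * δ)) ≤ 4 * Z.ncard := by exact_mod_cast hZcard
  have hfin : (Fintype.card V : ℝ) * (δ * δ) < 2 * Z.ncard := by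
    have h1 := mul_lt_mul_of_pos_right hU' (show (0 : ℝ) < 3 * (δ * δ) by positivity)
    have h2 : (0 : ℝ) < Fintype.card V * (δ * δ) := by positivity
    linarith
  rw [Fintype.card_prod, Fintype.card_prod, Fintype.card_fin]
  exact_mod_cast hfin

end Blowup

theorem statement_9 (c : ℝ) (hc0 : 0 < c) (hc1 : c < 1) :
    ∃ c' : ℝ, 0 < c' ∧
      ∀ (V : Type) [Fintype V] [DecidableEq V] (G : SimpleGraph V),
        ∀ [DecidableRel G.Adj],
        G.IsRegularOfDegree 4 →
        graphLambda G < 4 * c →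
        ∀ δ : ℕ, 1 ≤ δ →
        ∀ σ : SideAssignment G,
          c' * (δ : ℝ) * (Fintype.card V : ℝ) ≤ (treewidth (blowup G σ δ) : ℝ) := by
  refine ⟨(1 - c) / 128, by linarith, ?_⟩
  intro V _ _ G _ hreg hlam δ hδ σ
  rcases isEmpty_or_nonempty V with hV | hV
  · simp
  obtain ⟨d, hd⟩ := exists_width_eq_treewidth (blowup G σ δ)
  rw [← hd]
  obtain ⟨t, ht⟩ := exists_centroid_bag_s9 d
  have hbig : (1 - c) / 64 * δ * Fintype.card V ≤ (d.bag t).ncard := by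
    by_contra! hlt
    obtain ⟨p, hp, hp'⟩ := exists_large_component (σ := σ) hreg hc0 hc1 hlam hlt
    exact absurd (ht p hp) (not_le.2 hp')
  -- the blow-up has an edge, so the width is at least `1`; this pays for the `- 1` in the width
  -- when `δn` is small, at the cost of a factor `2` in the constant
  have hone : 1 ≤ d.width := by
    obtain ⟨u⟩ := hV
    obtain ⟨v, huv⟩ : ∃ v, G.Adj u v := by
      rw [← G.degree_pos_iff_exists_adj u, hreg u]; norm_num
    have hadj := blowup_adj_of_matching (σ := σ) huv (⟨0, hδ⟩ : Fin δ)
    obtain ⟨s, hs₁, hs₂⟩ := d.bag_edge hadj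
    have h1 := (Set.one_lt_ncard_iff (Set.toFinite (d.bag s))).2 ⟨_, _, hs₁, hs₂, hadj.ne⟩
    have h2 := bag_ncard_le_width_succ d s
    omega
  have h1 : ((d.bag t).ncard : ℝ) ≤ d.width + 1 := by
    exact_mod_cast bag_ncard_le_width_succ d t
  have h2 : (1 : ℝ) ≤ d.width := by exact_mod_cast hone
  linarith

end
end

section
/- There exists a universal real constant β > 0 such that the following holds: for every finite simple 4-regular graph G on n vertices, every integer δ ≥ 1, every side assignment σ for G, and every 1/4-separator C' of the blow-up G^δ_σ, the set C := {u ∈ V(G) : |({u}×{1,…,δ}²) ∩ C'| > β·δ} is a 1/2-separator of G of size at most |C'|/(β·δ). -/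
/-!
The constant `β = 1/4` works. Call a vertex `u` of `G` *good* if its grid contains at most `δ/4`
vertices of `C'`, so that `C` consists of the vertices that are not good.

In the grid of a good vertex at most `δ/4` rows and at most `δ/4` columns meet `C'`. Every row or
column avoiding `C'` is connected outside `C'`, and rows cross columns, so all the rows and columns
avoiding `C'` lie in one component of the blow-up minus `C'` (`core_conn_core`). If `u` and `v` are
good and adjacent, then each of the `δ` matching edges between their grids prolongs one line of the
grid of `u` to one line of the grid of `v`; at most `δ/4 + δ/4 < δ` of these edges are spoiled by
`C'`, so the components of `u` and `v` agree (`conn_of_adj`). Hence a component `K` of `G ∖ C`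
yields a single component of the blow-up minus `C'`, containing at least `3δ²/4` vertices in the
grid of each `u ∈ K` (`three_mul_le_supp`). As this component has at most `n δ²/4` vertices,
`|K| ≤ n/3 ≤ n/2`. The bound on `|C|` is a count of `C'` grid by grid.
-/

noncomputable section

section Separator

variable {V : Type} {G : SimpleGraph V} {σ : SideAssignment G} {δ : ℕ}

/-- `p` and `q` lie in the same connected component of `H` minus `S` (so neither is in `S`). -/
def Conn {W : Type} (H : SimpleGraph W) (S : Set W) (p q : W) : Prop :=
  ∃ (hp : p ∈ Sᶜ) (hq : q ∈ Sᶜ), (H.induce Sᶜ).Reachable ⟨p, hp⟩ ⟨q, hq⟩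

theorem Conn.symm {W : Type} {H : SimpleGraph W} {S : Set W} {p q : W} (h : Conn H S p q) :
    Conn H S q p := by
  obtain ⟨hp, hq, h⟩ := h
  exact ⟨hq, hp, h.symm⟩

theorem Conn.trans {W : Type} {H : SimpleGraph W} {S : Set W} {p q r : W} (h : Conn H S p q)
    (h' : Conn H S q r) : Conn H S p r := by
  obtain ⟨hp, hq, h⟩ := h
  obtain ⟨_, hr, h'⟩ := h'
  exact ⟨hp, hr, h.trans h'⟩

theorem conn_of_adj_of_notMem {W : Type} {H : SimpleGraph W} {S : Set W} {p q : W}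
    (h : H.Adj p q) (hp : p ∉ S) (hq : q ∉ S) : Conn H S p q :=
  ⟨hp, hq, SimpleGraph.Adj.reachable (by simpa using h)⟩

theorem conn_path {W : Type} {H : SimpleGraph W} {S : Set W} (f : Fin δ → W)
    (hf : ∀ i, f i ∉ S) (hadj : ∀ i j : Fin δ, j.val = i.val + 1 → H.Adj (f i) (f j))
    (i j : Fin δ) : Conn H S (f i) (f j) := by
  have key : ∀ (n : ℕ) (hn : n < δ), Conn H S (f ⟨0, by omega⟩) (f ⟨n, hn⟩) := by
    intro n
    induction n with
    | zero => exact fun hn => ⟨hf _, hf _, SimpleGraph.Reachable.refl _⟩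
    | succ k ih =>
      intro hn
      exact (ih (by omega)).trans
        (conn_of_adj_of_notMem (hadj ⟨k, by omega⟩ ⟨k + 1, hn⟩ rfl) (hf _) (hf _))
  exact (key i i.2).symm.trans (key j j.2)

/-- Row `r` of the grid of `u` avoids `S`. -/
def FullRow (S : Set (V × (Fin δ × Fin δ))) (u : V) (r : Fin δ) : Prop :=
  ∀ c, (u, (r, c)) ∉ S

/-- Column `c` of the grid of `u` avoids `S`. -/
def FullCol (S : Set (V × (Fin δ × Fin δ))) (u : V) (c : Fin δ) : Prop :=
  ∀ r, (u, (r, c)) ∉ S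

/-- The point `p` of the grid of `u` lies on a row or a column avoiding `S`. -/
def Core (S : Set (V × (Fin δ × Fin δ))) (u : V) (p : Fin δ × Fin δ) : Prop :=
  FullRow S u p.1 ∨ FullCol S u p.2

theorem conn_row {S : Set (V × (Fin δ × Fin δ))} {u : V} {r : Fin δ} (h : FullRow S u r)
    (c c' : Fin δ) : Conn (blowup G σ δ) S (u, (r, c)) (u, (r, c')) := by
  refine conn_path (fun c => (u, (r, c))) h (fun i j hij => ?_) c c'
  have : i ≠ j := by rintro rfl; omega
  simp [blowup, gridGraph, SimpleGraph.fromRel_adj, this, hij]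

theorem conn_col {S : Set (V × (Fin δ × Fin δ))} {u : V} {c : Fin δ} (h : FullCol S u c)
    (r r' : Fin δ) : Conn (blowup G σ δ) S (u, (r, c)) (u, (r', c)) := by
  refine conn_path (fun r => (u, (r, c))) h (fun i j hij => ?_) r r'
  have : i ≠ j := by rintro rfl; omega
  simp [blowup, gridGraph, SimpleGraph.fromRel_adj, this, hij]

/-- The vertices of `S` in the grid of `u`. -/
def gridPart (S : Set (V × (Fin δ × Fin δ))) (u : V) : Set (V × (Fin δ × Fin δ)) :=
  {p | p.1 = u ∧ p ∈ S}

/-- The line of the `δ × δ` grid through `p` perpendicular to side `s`, given by the index of the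
point where it meets that side. -/
def lineIdx (s : Fin 4) (p : Fin δ × Fin δ) : Fin δ :=
  match s with
  | 0 => p.2
  | 1 => p.1
  | 2 => p.2.rev
  | 3 => p.1.rev

/-- If the line starting at a boundary point and perpendicular to the side avoids `S`, then that
boundary point is a core point outside `S`. -/
theorem core_boundarySeg {S : Set (V × (Fin δ × Fin δ))} {u : V} {s : Fin 4} {i : Fin δ}
    (h : i ∉ (fun p : V × (Fin δ × Fin δ) => lineIdx s p.2) '' gridPart S u) :
    Core S u (boundarySeg δ s i) ∧ (u, boundarySeg δ s i) ∉ S := by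
  have h' : ∀ p, lineIdx s p = i → (u, p) ∉ S := fun p hp hS => h ⟨(u, p), ⟨rfl, hS⟩, hp⟩
  fin_cases s
  · exact ⟨Or.inr fun r => h' _ rfl, h' _ rfl⟩
  · exact ⟨Or.inl fun r => h' _ rfl, h' _ rfl⟩
  · exact ⟨Or.inr fun r => h' _ (Fin.rev_rev i), h' _ (Fin.rev_rev i)⟩
  · exact ⟨Or.inl fun r => h' _ (Fin.rev_rev i), h' _ (Fin.rev_rev i)⟩

variable [Fintype V]

theorem ncard_lines_le (S : Set (V × (Fin δ × Fin δ))) (u : V) (s : Fin 4) :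
    ((fun p : V × (Fin δ × Fin δ) => lineIdx s p.2) '' gridPart S u).ncard
      ≤ (gridPart S u).ncard :=
  Set.ncard_image_le (Set.toFinite _)

theorem exists_notMem_of_ncard_lt {A : Set (Fin δ)} (h : A.ncard < δ) : ∃ i, i ∉ A := by
  by_contra! hA
  rw [Set.eq_univ_of_forall hA, Set.ncard_univ, Nat.card_fin] at h
  exact lt_irrefl _ h

/-- A good grid contains a row and a column avoiding `S`; every core point reaches their crossing
point by walking along its own line. -/
theorem core_conn_core {S : Set (V × (Fin δ × Fin δ))} {u : V} (hδ : 1 ≤ δ)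
    (hu : 4 * (gridPart S u).ncard ≤ δ) {p q : Fin δ × Fin δ} (hp : Core S u p)
    (hq : Core S u q) : Conn (blowup G σ δ) S (u, p) (u, q) := by
  obtain ⟨r₀, hr₀⟩ := exists_notMem_of_ncard_lt
    (lt_of_le_of_lt (ncard_lines_le S u 1) (by omega))
  obtain ⟨c₀, hc₀⟩ := exists_notMem_of_ncard_lt
    (lt_of_le_of_lt (ncard_lines_le S u 0) (by omega))
  have hr : FullRow S u r₀ := fun c hS => hr₀ ⟨_, ⟨rfl, hS⟩, rfl⟩
  have hc : FullCol S u c₀ := fun r hS => hc₀ ⟨_, ⟨rfl, hS⟩, rfl⟩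
  have key : ∀ p, Core S u p → Conn (blowup G σ δ) S (u, p) (u, (r₀, c₀)) := by
    rintro ⟨r, c⟩ (h | h)
    · exact (conn_row h c c₀).trans (conn_col hc r r₀)
    · exact (conn_col h r r₀).trans (conn_row hr c c₀)
  exact (key p hp).trans (key q hq).symm

theorem conn_of_adj {S : Set (V × (Fin δ × Fin δ))} {u v : V} (hδ : 1 ≤ δ)
    (hu : 4 * (gridPart S u).ncard ≤ δ) (hv : 4 * (gridPart S v).ncard ≤ δ) (h : G.Adj u v)
    {p q : Fin δ × Fin δ} (hp : Core S u p) (hq : Core S v q) :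
    Conn (blowup G σ δ) S (u, p) (v, q) := by
  set s := σ u ⟨v, h⟩ with hs
  set t := σ v ⟨u, h.symm⟩ with ht
  set A := (fun p : V × (Fin δ × Fin δ) => lineIdx s p.2) '' gridPart S u with hA
  set B := (fun p : V × (Fin δ × Fin δ) => lineIdx t p.2) '' gridPart S v with hB
  have hAc : A.ncard ≤ _ := ncard_lines_le S u s
  have hBc : B.ncard ≤ _ := ncard_lines_le S v t
  -- `i` indexes a matching edge whose two perpendicular lines both avoid `S`.
  obtain ⟨i, hi⟩ : ∃ i, i ∉ A ∪ Fin.rev '' B := by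
    apply exists_notMem_of_ncard_lt
    have h1 := Set.ncard_union_le A (Fin.rev '' B)
    have h2 : (Fin.rev '' B).ncard ≤ B.ncard := Set.ncard_image_le (Set.toFinite _)
    omega
  have hiA : i ∉ A := fun h => hi (Or.inl h)
  have hiB : i.rev ∉ B := fun h => hi (Or.inr ⟨_, h, Fin.rev_rev i⟩)
  obtain ⟨hcu, hu'⟩ := core_boundarySeg hiA
  obtain ⟨hcv, hv'⟩ := core_boundarySeg hiB
  have hadj : (blowup G σ δ).Adj (u, boundarySeg δ s i) (v, boundarySeg δ t i.rev) := by
    rw [blowup, SimpleGraph.fromRel_adj]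
    exact ⟨fun e => h.ne (congrArg Prod.fst e), Or.inl (Or.inr ⟨h, i, rfl, rfl⟩)⟩
  exact (core_conn_core hδ hu hp hcu).trans
    ((conn_of_adj_of_notMem hadj hu' hv').trans (core_conn_core hδ hv hcv hq))

theorem conn_of_reachable {S : Set (V × (Fin δ × Fin δ))} {C : Set V} (hδ : 1 ≤ δ)
    (hC : ∀ u ∉ C, 4 * (gridPart S u).ncard ≤ δ) {x y : (Cᶜ : Set V)}
    (h : (G.induce Cᶜ).Reachable x y) {p q : Fin δ × Fin δ} (hp : Core S x p)
    (hq : Core S y q) : Conn (blowup G σ δ) S (x, p) (y, q) := by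
  obtain ⟨w⟩ := h
  induction w generalizing p with
  | @nil x => exact core_conn_core hδ (hC x x.2) hp hq
  | @cons x y z hxy w ih =>
    obtain ⟨c, hc⟩ := exists_notMem_of_ncard_lt
      (lt_of_le_of_lt (ncard_lines_le S y 0) (by have := hC y y.2; omega))
    have hcore := (core_boundarySeg hc).1
    exact (conn_of_adj hδ (hC x x.2) (hC y y.2) (by simpa using hxy) hp hcore).trans (ih hcore hq)

/-- A good vertex has at least `3δ/4` rows avoiding `S`, hence at least `3δ²/4` points on such
rows. -/
theorem three_mul_le_fullRows {S : Set (V × (Fin δ × Fin δ))} {u : V}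
    (hu : 4 * (gridPart S u).ncard ≤ δ) :
    3 * (δ * δ) ≤ 4 * {p : V × (Fin δ × Fin δ) | p.1 = u ∧ FullRow S u p.2.1}.ncard := by
  set A := (fun p : V × (Fin δ × Fin δ) => lineIdx 1 p.2) '' gridPart S u with hA
  have hAc : A.ncard ≤ _ := ncard_lines_le S u 1
  have hsum := Set.ncard_add_ncard_compl A
  rw [Nat.card_fin] at hsum
  have hle : ((fun x : Fin δ × Fin δ => (u, x)) '' (Aᶜ ×ˢ Set.univ)).ncard
      ≤ {p : V × (Fin δ × Fin δ) | p.1 = u ∧ FullRow S u p.2.1}.ncard := by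
    refine Set.ncard_le_ncard ?_ (Set.toFinite _)
    rintro _ ⟨⟨r, c⟩, ⟨hr, -⟩, rfl⟩
    exact ⟨rfl, fun c' hS => hr ⟨_, ⟨rfl, hS⟩, rfl⟩⟩
  rw [Set.ncard_image_of_injective _ (Prod.mk_right_injective u), Set.ncard_prod, Set.ncard_univ,
    Nat.card_fin] at hle
  have : 3 * δ ≤ 4 * (Aᶜ).ncard := by omega
  nlinarith

/-- Lower bound for the size of a set by its parts in the individual grids. -/
theorem ncard_mul_le_of_fibers {a b : ℕ} (T : Set (V × (Fin δ × Fin δ))) (U : Set V)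
    (h : ∀ u ∈ U, b ≤ a * {p : V × (Fin δ × Fin δ) | p.1 = u ∧ p ∈ T}.ncard) :
    U.ncard * b ≤ a * T.ncard := by
  classical
  have hsum : ∑ u ∈ U.toFinset, {p : V × (Fin δ × Fin δ) | p.1 = u ∧ p ∈ T}.ncard
      ≤ T.ncard := by
    rw [Set.ncard_eq_toFinset_card' T]
    have : ∀ u, {p : V × (Fin δ × Fin δ) | p.1 = u ∧ p ∈ T}.ncard
        = (T.toFinset.filter (fun p => p.1 = u)).card := by
      intro u
      rw [Set.ncard_eq_toFinset_card']
      congr 1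
      ext p
      simp [and_comm]
    simp only [this]
    rw [Finset.card_eq_sum_card_fiberwise (f := Prod.fst) (t := Finset.univ) (by simp)]
    exact Finset.sum_le_sum_of_subset (Finset.subset_univ _)
  calc U.ncard * b = ∑ u ∈ U.toFinset, b := by
        rw [Finset.sum_const, smul_eq_mul, Set.ncard_eq_toFinset_card']
    _ ≤ ∑ u ∈ U.toFinset, a * {p : V × (Fin δ × Fin δ) | p.1 = u ∧ p ∈ T}.ncard :=
        Finset.sum_le_sum fun u hu => h u (by simpa using hu)
    _ = a * ∑ u ∈ U.toFinset, {p : V × (Fin δ × Fin δ) | p.1 = u ∧ p ∈ T}.ncard := by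
        rw [Finset.mul_sum]
    _ ≤ a * T.ncard := Nat.mul_le_mul_left _ hsum

theorem three_mul_le_supp {S : Set (V × (Fin δ × Fin δ))} {C : Set V} (hδ : 1 ≤ δ)
    (hC : ∀ u ∉ C, 4 * (gridPart S u).ncard ≤ δ) (K : (G.induce Cᶜ).ConnectedComponent) :
    ∃ L : ((blowup G σ δ).induce Sᶜ).ConnectedComponent,
      K.supp.ncard * (3 * (δ * δ)) ≤ 4 * L.supp.ncard := by
  induction K using SimpleGraph.ConnectedComponent.ind with | _ x => ?_
  obtain ⟨c, hc⟩ := exists_notMem_of_ncard_lt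
    (lt_of_le_of_lt (ncard_lines_le S x 0) (by have := hC x x.2; omega))
  obtain ⟨hcore, hx⟩ := core_boundarySeg hc
  refine ⟨((blowup G σ δ).induce Sᶜ).connectedComponentMk ⟨_, hx⟩, ?_⟩
  set K := (G.induce Cᶜ).connectedComponentMk x
  set L := ((blowup G σ δ).induce Sᶜ).connectedComponentMk ⟨_, hx⟩
  rw [← Set.ncard_image_of_injective K.supp Subtype.val_injective,
    ← Set.ncard_image_of_injective L.supp Subtype.val_injective]
  apply ncard_mul_le_of_fibers
  rintro _ ⟨y, hy, rfl⟩
  refine (three_mul_le_fullRows (hC y y.2)).trans (Nat.mul_le_mul_left _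
    (Set.ncard_le_ncard ?_ (Set.toFinite _)))
  rintro ⟨_, p⟩ ⟨rfl, hp⟩
  have hyx : (G.induce Cᶜ).Reachable y x := SimpleGraph.ConnectedComponent.exact hy
  obtain ⟨h1, h2, h⟩ := conn_of_reachable (σ := σ) hδ hC hyx (Or.inl hp) hcore
  exact ⟨rfl, ⟨_, h1⟩, SimpleGraph.ConnectedComponent.sound h, rfl⟩

end Separator

theorem statement_10 :
    ∃ β : ℝ, 0 < β ∧
      ∀ (V : Type) [Fintype V] (G : SimpleGraph V),
        ∀ [DecidableRel G.Adj],
        G.IsRegularOfDegree 4 →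
        ∀ δ : ℕ, 1 ≤ δ →
        ∀ (σ : SideAssignment G) (C' : Set (V × (Fin δ × Fin δ))),
          IsAlphaSeparator (blowup G σ δ) (1/4) C' →
          IsAlphaSeparator G (1/2)
            {u : V | β * (δ : ℝ) < (({p : V × (Fin δ × Fin δ) | p.1 = u ∧ p ∈ C'}).ncard : ℝ)} ∧
          (({u : V | β * (δ : ℝ) <
              (({p : V × (Fin δ × Fin δ) | p.1 = u ∧ p ∈ C'}).ncard : ℝ)}).ncard : ℝ)
            ≤ (C'.ncard : ℝ) / (β * (δ : ℝ)) := by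
  refine ⟨1 / 4, by norm_num, ?_⟩
  intro V _ G _ _ δ hδ σ S hS
  have hδ' : (1 : ℝ) ≤ δ := by exact_mod_cast hδ
  set C : Set V := {u : V | 1 / 4 * (δ : ℝ) <
    (({p : V × (Fin δ × Fin δ) | p.1 = u ∧ p ∈ S}).ncard : ℝ)} with hCdef
  constructor
  · intro K
    have hC : ∀ u ∉ C, 4 * (gridPart S u).ncard ≤ δ := by
      intro u hu
      have h : ((gridPart S u).ncard : ℝ) ≤ 1 / 4 * δ := not_lt.mp hu
      have : (4 : ℝ) * (gridPart S u).ncard ≤ δ := by linarith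
      exact_mod_cast this
    obtain ⟨L, hL⟩ := three_mul_le_supp (σ := σ) hδ hC K
    have hL' : (K.supp.ncard : ℝ) * (3 * (δ * δ)) ≤ 4 * L.supp.ncard := by exact_mod_cast hL
    have h := hS L
    simp only [Fintype.card_prod, Fintype.card_fin, Nat.cast_mul] at h
    have hn : (0 : ℝ) ≤ Fintype.card V := Nat.cast_nonneg _
    have hpos : (0 : ℝ) < δ * δ := by positivity
    have : (K.supp.ncard : ℝ) * 3 ≤ Fintype.card V :=
      le_of_mul_le_mul_right (by linarith) hpos
    linarith
  · have h : C.ncard * δ ≤ 4 * S.ncard := by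
      refine ncard_mul_le_of_fibers S C fun u hu => ?_
      have hu' : 1 / 4 * (δ : ℝ) <
        (({p : V × (Fin δ × Fin δ) | p.1 = u ∧ p ∈ S}).ncard : ℝ) := hu
      have : (δ : ℝ) ≤ 4 * ({p : V × (Fin δ × Fin δ) | p.1 = u ∧ p ∈ S}.ncard : ℝ) := by linarith
      exact_mod_cast this
    have h' : (C.ncard : ℝ) * δ ≤ 4 * S.ncard := by exact_mod_cast h
    rw [le_div_iff₀ (by positivity)]
    linarith

end
end

section
/- Let P be a finite simple 4-regular bipartite graph with bipartition V(P) = V1 ∪ V2, let c : E(P) → {1,2,3,4} be a proper edge-coloring of P, let Δ ≥ 1, let D = {1,…,Δ}, and suppose given for each edge e = uv of P with u ∈ V1 and v ∈ V2 a relation R_e ⊆ D × D. Then the associated 4-regular graph tiling instance is satisfiable if and only if the associated binary CSP instance is satisfiable, i.e., if and only if there exists f : V(P) → D such that (f(u), f(v)) ∈ R_e for every edge e = uv of P with u ∈ V1, v ∈ V2. -/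
/-!
STATEMENT 11: Let P be a finite simple 4-regular bipartite graph with bipartition
V(P) = V1 ∪ V2, let c : E(P) → {1,2,3,4} be a proper edge-coloring of P, let Δ ≥ 1,
let D = {1,…,Δ}, and suppose given for each edge e = uv of P with u ∈ V1 and v ∈ V2 a
relation R_e ⊆ D × D.  Then the associated 4-regular graph tiling instance is satisfiable
if and only if the associated binary CSP instance is satisfiable, i.e., iff there exists
f : V(P) → D such that (f(u), f(v)) ∈ R_e for every edge e = uv of P with u ∈ V1, v ∈ V2.

Conventions: the four colors/indices {1,2,3,4} are encoded by `Fin 4` (so 1↦0, 2↦1, 3↦2,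
4↦3), and the domain {1,…,Δ} by `Fin Δ`.  The ground set of the tiling instance is
W = (V(P) × {1,2,3,4}) ⊕ E(P).  Rather than constructing the four involutions U, D, L, R
of the instance, the theorem quantifies over all quadruples of fixed-point-free
involutions satisfying the defining exchange equations of the construction (which
determine them uniquely).
-/

/-- `f` is a fixed-point-free involution. -/
def FPFInvolution {W : Type} (f : W → W) : Prop :=
  Function.Involutive f ∧ ∀ w, f w ≠ w

/-- The edge of `P` corresponding to a pair of adjacent vertices. -/
def edgeOf {V : Type} {P : SimpleGraph V} {u v : V} (h : P.Adj u v) :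
    {e : Sym2 V // e ∈ P.edgeSet} :=
  ⟨s(u, v), (SimpleGraph.mem_edgeSet P).mpr h⟩

/-!
In a solution `s` of the tiling instance the four tiles `(w, i)` of a vertex `w` carry diagonal
values, and they all carry the same one: for `w ∈ V1` the involutions `U` and `D` run through them
in a cycle and preserve the second coordinate, while for `w ∈ V2` the involutions `R` and `L` do
so and preserve the first. Calling this common value `f w`, the tile of an edge `e = uv` agrees
with `(u, c e)` in its first coordinate and with `(v, c e)` in its second, so it carries
`(f u, f v)`, which must lie in `R_e`.

Conversely, put `(f w, f w)` on `(w, i)` and `(f u, f v)` on `e = uv`. Checking the constraints at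
`(w, i)` requires knowing its partners under all four involutions, hence that `w` is incident to an
edge of color `i`. This is where 4-regularity enters (`exists_adj_color`): the proper coloring is
injective on the four edges at `w`, hence takes all four colors there. That `s` is well defined on
edges is the uniqueness of the orientation of an edge from `V1` to `V2` (`edgeOf_inj`).
-/

/-- At each vertex of a properly 4-edge-colored 4-regular graph every color occurs: an injective
map from the 4-element neighbor set to `Fin 4` is onto. -/
lemma exists_adj_color {V : Type} [Fintype V] (P : SimpleGraph V) [DecidableRel P.Adj]
    (hreg : P.IsRegularOfDegree 4) (c : {e : Sym2 V // e ∈ P.edgeSet} → Fin 4)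
    (hproper : ∀ e f : {e : Sym2 V // e ∈ P.edgeSet}, e ≠ f →
      (∃ x : V, x ∈ (e : Sym2 V) ∧ x ∈ (f : Sym2 V)) → c e ≠ c f)
    (x : V) (i : Fin 4) : ∃ (y : V) (h : P.Adj x y), c (edgeOf h) = i := by
  let g : P.neighborSet x → Fin 4 := fun y => c (edgeOf ((P.mem_neighborSet x y).mp y.2))
  have hg : Function.Injective g := by
    rintro ⟨y, hy⟩ ⟨z, hz⟩ hyz
    by_contra hne
    refine hproper _ _ ?_ ⟨x, Sym2.mem_mk_left x y, Sym2.mem_mk_left x z⟩ hyz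
    intro he
    exact hne (Subtype.ext (Sym2.congr_right.mp (congrArg Subtype.val he)))
  have hcard : Fintype.card (P.neighborSet x) = Fintype.card (Fin 4) := by
    rw [P.card_neighborSet_eq_degree, hreg x, Fintype.card_fin]
  obtain ⟨⟨y, hy⟩, h⟩ := ((Fintype.bijective_iff_injective_and_card g).mpr ⟨hg, hcard⟩).2 i
  exact ⟨y, hy, h⟩

lemma edgeOf_symm {V : Type} {P : SimpleGraph V} {u v : V} (h : P.Adj u v) :
    edgeOf h.symm = edgeOf h :=
  Subtype.ext Sym2.eq_swap

/-- An edge has only one orientation from `V1` to `V2`, these sets being disjoint. -/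
lemma edgeOf_inj {V : Type} {P : SimpleGraph V} {V1 V2 : Set V}
    (hpart : ∀ x : V, (x ∈ V1 ∧ x ∉ V2) ∨ (x ∈ V2 ∧ x ∉ V1)) {u v u' v' : V}
    (h : P.Adj u v) (h' : P.Adj u' v') (hu : u ∈ V1) (hv' : v' ∈ V2)
    (he : edgeOf h = edgeOf h') : u = u' ∧ v = v' := by
  rcases Sym2.eq_iff.mp (congrArg Subtype.val he) with h1 | ⟨rfl, rfl⟩
  · exact h1
  · rcases hpart u with h2 | h2
    · exact absurd hv' h2.2
    · exact absurd hu h2.2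

theorem statement_11 {V : Type} [Fintype V] (P : SimpleGraph V) [DecidableRel P.Adj]
    (hreg : P.IsRegularOfDegree 4)
    (V1 V2 : Set V)
    (hpart : ∀ x : V, (x ∈ V1 ∧ x ∉ V2) ∨ (x ∈ V2 ∧ x ∉ V1))
    (hbip : ∀ ⦃u v : V⦄, P.Adj u v → ¬(u ∈ V1 ∧ v ∈ V1) ∧ ¬(u ∈ V2 ∧ v ∈ V2))
    (c : {e : Sym2 V // e ∈ P.edgeSet} → Fin 4)
    (hproper : ∀ e f : {e : Sym2 V // e ∈ P.edgeSet}, e ≠ f →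
      (∃ x : V, x ∈ (e : Sym2 V) ∧ x ∈ (f : Sym2 V)) → c e ≠ c f)
    (Δ : ℕ) (hΔ : 1 ≤ Δ)
    (Rel : {e : Sym2 V // e ∈ P.edgeSet} → Set (Fin Δ × Fin Δ))
    (U D L R : (V × Fin 4) ⊕ {e : Sym2 V // e ∈ P.edgeSet} →
               (V × Fin 4) ⊕ {e : Sym2 V // e ∈ P.edgeSet})
    (hU : FPFInvolution U) (hD : FPFInvolution D)
    (hL : FPFInvolution L) (hR : FPFInvolution R)
    -- for u ∈ V1, U exchanges (u,1)↔(u,2) and (u,3)↔(u,4)  (written 0-indexed):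
    (hUV1 : ∀ u ∈ V1, U (.inl (u, 0)) = .inl (u, 1) ∧ U (.inl (u, 1)) = .inl (u, 0) ∧
                      U (.inl (u, 2)) = .inl (u, 3) ∧ U (.inl (u, 3)) = .inl (u, 2))
    -- for u ∈ V1, D exchanges (u,2)↔(u,3) and (u,4)↔(u,1)  (written 0-indexed):
    (hDV1 : ∀ u ∈ V1, D (.inl (u, 1)) = .inl (u, 2) ∧ D (.inl (u, 2)) = .inl (u, 1) ∧
                      D (.inl (u, 3)) = .inl (u, 0) ∧ D (.inl (u, 0)) = .inl (u, 3))
    -- for v ∈ V2, R exchanges (v,1)↔(v,2) and (v,3)↔(v,4)  (written 0-indexed):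
    (hRV2 : ∀ v ∈ V2, R (.inl (v, 0)) = .inl (v, 1) ∧ R (.inl (v, 1)) = .inl (v, 0) ∧
                      R (.inl (v, 2)) = .inl (v, 3) ∧ R (.inl (v, 3)) = .inl (v, 2))
    -- for v ∈ V2, L exchanges (v,2)↔(v,3) and (v,4)↔(v,1)  (written 0-indexed):
    (hLV2 : ∀ v ∈ V2, L (.inl (v, 1)) = .inl (v, 2) ∧ L (.inl (v, 2)) = .inl (v, 1) ∧
                      L (.inl (v, 3)) = .inl (v, 0) ∧ L (.inl (v, 0)) = .inl (v, 3))
    -- for each edge e = uv with u ∈ V1, v ∈ V2 and color i = c(e), R and L both exchange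
    -- e ↔ (u,i), and U and D both exchange e ↔ (v,i):
    (hedge : ∀ (u v : V) (h : P.Adj u v), u ∈ V1 → v ∈ V2 →
      R (.inr (edgeOf h)) = .inl (u, c (edgeOf h)) ∧
      R (.inl (u, c (edgeOf h))) = .inr (edgeOf h) ∧
      L (.inr (edgeOf h)) = .inl (u, c (edgeOf h)) ∧
      L (.inl (u, c (edgeOf h))) = .inr (edgeOf h) ∧
      U (.inr (edgeOf h)) = .inl (v, c (edgeOf h)) ∧
      U (.inl (v, c (edgeOf h))) = .inr (edgeOf h) ∧
      D (.inr (edgeOf h)) = .inl (v, c (edgeOf h)) ∧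
      D (.inl (v, c (edgeOf h))) = .inr (edgeOf h)) :
    -- the tiling instance (with S_{(w,i)} the diagonal and S_e = R_e) is satisfiable
    -- iff the binary CSP instance is satisfiable:
    ((∃ s : (V × Fin 4) ⊕ {e : Sym2 V // e ∈ P.edgeSet} → Fin Δ × Fin Δ,
        (∀ w : V × Fin 4, (s (.inl w)).1 = (s (.inl w)).2) ∧
        (∀ e : {e : Sym2 V // e ∈ P.edgeSet}, s (.inr e) ∈ Rel e) ∧
        (∀ w, (s (L w)).1 = (s w).1 ∧ (s (R w)).1 = (s w).1 ∧
              (s (U w)).2 = (s w).2 ∧ (s (D w)).2 = (s w).2)) ↔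
      (∃ f : V → Fin Δ, ∀ (u v : V) (h : P.Adj u v), u ∈ V1 → v ∈ V2 →
        (f u, f v) ∈ Rel (edgeOf h))) := by
  have hother1 : ∀ {u v : V}, P.Adj u v → u ∈ V1 → v ∈ V2 := fun {u v} h hu =>
    (hpart v).elim (fun hv => absurd ⟨hu, hv.1⟩ (hbip h).1) And.left
  have hother2 : ∀ {u v : V}, P.Adj u v → u ∈ V2 → v ∈ V1 := fun {u v} h hu =>
    (hpart v).elim And.left (fun hv => absurd ⟨hu, hv.1⟩ (hbip h).2)
  constructor
  · rintro ⟨s, hdiag, hRel, hs⟩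
    -- The four tiles of a vertex carry the same value; three of the four steps around the
    -- cycle suffice.
    have hconst : ∀ (x : V) (i : Fin 4), (s (.inl (x, i))).1 = (s (.inl (x, 0))).1 := by
      intro x
      rcases hpart x with ⟨hx, -⟩ | ⟨hx, -⟩
      · obtain ⟨u0, -, u2, -⟩ := hUV1 x hx
        obtain ⟨d1, -, -, -⟩ := hDV1 x hx
        have e0 := (hs (.inl (x, 0))).2.2.1
        have e1 := (hs (.inl (x, 1))).2.2.2
        have e2 := (hs (.inl (x, 2))).2.2.1
        rw [u0] at e0
        rw [d1] at e1
        rw [u2] at e2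
        intro i
        rw [hdiag, hdiag]
        fin_cases i
        · rfl
        · exact e0
        · exact e1.trans e0
        · exact e2.trans (e1.trans e0)
      · obtain ⟨r0, -, r2, -⟩ := hRV2 x hx
        obtain ⟨l1, -, -, -⟩ := hLV2 x hx
        have e0 := (hs (.inl (x, 0))).2.1
        have e1 := (hs (.inl (x, 1))).1
        have e2 := (hs (.inl (x, 2))).2.1
        rw [r0] at e0
        rw [l1] at e1
        rw [r2] at e2
        intro i
        fin_cases i
        · rfl
        · exact e0
        · exact e1.trans e0
        · exact e2.trans (e1.trans e0)
    refine ⟨fun x => (s (.inl (x, 0))).1, fun u v h hu hv => ?_⟩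
    obtain ⟨r, -, -, -, t, -, -, -⟩ := hedge u v h hu hv
    have e1 := (hs (.inr (edgeOf h))).2.1
    have e2 := (hs (.inr (edgeOf h))).2.2.1
    rw [r, hconst] at e1
    rw [t, ← hdiag, hconst] at e2
    have := hRel (edgeOf h)
    rwa [← Prod.mk.eta (p := s (.inr (edgeOf h))), ← e1, ← e2] at this
  · rintro ⟨f, hf⟩
    have hor : ∀ e : {e : Sym2 V // e ∈ P.edgeSet},
        ∃ (u v : V) (h : P.Adj u v), u ∈ V1 ∧ v ∈ V2 ∧ e = edgeOf h := by
      rintro ⟨e, he⟩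
      induction e using Sym2.ind with
      | _ a b =>
        have hab : P.Adj a b := he
        rcases hpart a with ⟨ha, -⟩ | ⟨ha, -⟩
        · exact ⟨a, b, hab, ha, hother1 hab ha, rfl⟩
        · exact ⟨b, a, hab.symm, hother2 hab ha, ha, (edgeOf_symm hab).symm⟩
    choose p q hpq hp hq he using hor
    let s : (V × Fin 4) ⊕ {e : Sym2 V // e ∈ P.edgeSet} → Fin Δ × Fin Δ :=
      Sum.elim (fun w => (f w.1, f w.1)) (fun e => (f (p e), f (q e)))
    have sl : ∀ w : V × Fin 4, s (.inl w) = (f w.1, f w.1) := fun _ => rfl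
    have sr : ∀ (u v : V) (h : P.Adj u v), u ∈ V1 → v ∈ V2 →
        s (.inr (edgeOf h)) = (f u, f v) := by
      intro u v h hu hv
      obtain ⟨h1, h2⟩ := edgeOf_inj hpart h (hpq (edgeOf h)) hu (hq _) (he _)
      change (f (p _), f (q _)) = _
      rw [← h1, ← h2]
    refine ⟨s, fun w => rfl, fun e => ?_, ?_⟩
    · have := hf _ _ (hpq e) (hp e) (hq e)
      rwa [← he e] at this
    rintro (⟨x, i⟩ | e)
    · obtain ⟨y, h, rfl⟩ := exists_adj_color P hreg c hproper x i
      rcases hpart x with ⟨hx, -⟩ | ⟨hx, -⟩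
      · obtain ⟨-, r, -, l, -⟩ := hedge x y h hx (hother1 h hx)
        rw [r, l, sr x y h hx (hother1 h hx), sl]
        refine ⟨rfl, rfl, ?_⟩
        obtain ⟨u0, u1, u2, u3⟩ := hUV1 x hx
        obtain ⟨d1, d2, d3, d0⟩ := hDV1 x hx
        generalize c (edgeOf h) = i
        fin_cases i <;> simp [sl, u0, u1, u2, u3, d0, d1, d2, d3]
      · have hy := hother2 h hx
        obtain ⟨-, -, -, -, -, t, -, d⟩ := hedge y x h.symm hy hx
        rw [edgeOf_symm h] at t d
        have hsr := sr y x h.symm hy hx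
        rw [edgeOf_symm h] at hsr
        rw [t, d, hsr, sl]
        obtain ⟨r0, r1, r2, r3⟩ := hRV2 x hx
        obtain ⟨l1, l2, l3, l0⟩ := hLV2 x hx
        generalize c (edgeOf h) = i
        fin_cases i <;> simp [sl, r0, r1, r2, r3, l0, l1, l2, l3]
    · obtain ⟨u, v, h, hu, hv, rfl⟩ : ∃ (u v : V) (h : P.Adj u v), u ∈ V1 ∧ v ∈ V2 ∧
          e = edgeOf h := ⟨p e, q e, hpq e, hp e, hq e, he e⟩
      obtain ⟨r, -, l, -, t, -, d, -⟩ := hedge u v h hu hv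
      rw [r, l, t, d, sr u v h hu hv, sl, sl]
      exact ⟨rfl, rfl, rfl, rfl⟩
end
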